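/- Any compatible Riemannian metric on an eight-dimensional quaternionic manifold gives a QKT structure: if M is an 8-manifold with an almost quaternionic structure 𝒢 admitting a torsion-free quaternionic connection, then for any Riemannian metric g compatible with 𝒢 the resulting almost quaternion-Hermitian manifold has intrinsic torsion in (K+E)H. -/

import Mathlib

/-!  Synthetic (Koszul-style) model of an almost quaternion-Hermitian `4n`-manifold.

`C` plays the role of the commutative ℝ-algebra of smooth functions and `V` that of
the `C`-module of vector fields, equipped with a directional derivative `D`, a Lie
bracket, a Riemannian metric `g` together with its Levi-Civita connection `nab`
(characterised by being torsion-free and metric), a local adapted basis `I, J, K`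
of anticommuting almost complex structures with `K = I J`, each compatible with the
metric, and a (local) orthonormal frame.  -/

noncomputable section

open scoped BigOperators

structure AQH (n : ℕ) (C : Type*) (V : Type*) [CommRing C] [Algebra ℝ C]
    [AddCommGroup V] [Module C V] where
  /-- derivative of a function along a vector field -/
  D : V → C → C
  D_add : ∀ X f g, D X (f + g) = D X f + D X g
  D_mul : ∀ X f g, D X (f * g) = f * D X g + g * D X f
  D_const : ∀ X (r : ℝ), D X (algebraMap ℝ C r) = 0
  D_addX : ∀ X Y f, D (X + Y) f = D X f + D Y f
  D_smulX : ∀ (f : C) (X : V) (h : C), D (f • X) h = f * D X h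
  /-- the Lie bracket of vector fields -/
  bracket : V → V → V
  bracket_skew : ∀ X Y, bracket X Y = -bracket Y X
  bracket_add : ∀ X Y Z, bracket X (Y + Z) = bracket X Y + bracket X Z
  bracket_smul : ∀ X (f : C) Y, bracket X (f • Y) = f • bracket X Y + (D X f) • Y
  bracket_jacobi : ∀ X Y Z,
    bracket X (bracket Y Z) + bracket Y (bracket Z X) + bracket Z (bracket X Y) = 0
  D_bracket : ∀ X Y f, D (bracket X Y) f = D X (D Y f) - D Y (D X f)
  /-- the Riemannian metric -/
  g : V → V → C
  g_symm : ∀ X Y, g X Y = g Y X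
  g_add : ∀ X Y Z, g (X + Y) Z = g X Z + g Y Z
  g_smul : ∀ (f : C) X Y, g (f • X) Y = f * g X Y
  /-- the Levi-Civita connection -/
  nab : V → V → V
  nab_addX : ∀ X Y Z, nab (X + Y) Z = nab X Z + nab Y Z
  nab_smulX : ∀ (f : C) X Y, nab (f • X) Y = f • nab X Y
  nab_add : ∀ X Y Z, nab X (Y + Z) = nab X Y + nab X Z
  nab_leibniz : ∀ X (f : C) Y, nab X (f • Y) = f • nab X Y + (D X f) • Y
  torsion_free : ∀ X Y, nab X Y - nab Y X = bracket X Y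
  nab_metric : ∀ X Y Z, D X (g Y Z) = g (nab X Y) Z + g Y (nab X Z)
  /-- the (local) adapted basis of almost complex structures -/
  I : V → V
  J : V → V
  K : V → V
  I_lin : ∀ (f : C) X Y, I (f • X + Y) = f • I X + I Y
  J_lin : ∀ (f : C) X Y, J (f • X + Y) = f • J X + J Y
  K_lin : ∀ (f : C) X Y, K (f • X + Y) = f • K X + K Y
  I_sq : ∀ X, I (I X) = -X
  J_sq : ∀ X, J (J X) = -X
  K_def : ∀ X, K X = I (J X)
  anticomm : ∀ X, I (J X) = -J (I X)
  I_metric : ∀ X Y, g (I X) (I Y) = g X Y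
  J_metric : ∀ X Y, g (J X) (J Y) = g X Y
  /-- a (local) orthonormal frame -/
  frame : Fin (4 * n) → V
  frame_orthonormal : ∀ i j, g (frame i) (frame j) = if i = j then 1 else 0
  frame_span : ∀ X, X = ∑ i, g X (frame i) • frame i

namespace AQH

section ops

variable {C V : Type*} [CommRing C]

/-- the operator `A_(1)` on covariant 3-tensors -/
def op1 (A : V → V) (ψ : V → V → V → C) : V → V → V → C := fun X Y Z => -ψ (A X) Y Z

/-- the operator `A_(2)` on covariant 3-tensors -/
def op2 (A : V → V) (ψ : V → V → V → C) : V → V → V → C := fun X Y Z => -ψ X (A Y) Z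

/-- the operator `A_(3)` on covariant 3-tensors -/
def op3 (A : V → V) (ψ : V → V → V → C) : V → V → V → C := fun X Y Z => -ψ X Y (A Z)

/-- the operator `A_(12) = A_(1) A_(2)` on covariant 3-tensors -/
def op12 (A : V → V) (ψ : V → V → V → C) : V → V → V → C := fun X Y Z => ψ (A X) (A Y) Z

/-- the operator `A_(13) = A_(1) A_(3)` on covariant 3-tensors -/
def op13 (A : V → V) (ψ : V → V → V → C) : V → V → V → C := fun X Y Z => ψ (A X) Y (A Z)

/-- the operator `A_(23) = A_(2) A_(3)` on covariant 3-tensors -/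
def op23 (A : V → V) (ψ : V → V → V → C) : V → V → V → C := fun X Y Z => ψ X (A Y) (A Z)

/-- the operator `𝓛_A = A_(12) + A_(13) + A_(23)` on three-forms -/
def calL (A : V → V) (ψ : V → V → V → C) : V → V → V → C :=
  fun X Y Z => op12 A ψ X Y Z + op13 A ψ X Y Z + op23 A ψ X Y Z

/-- the action `(A ν)(X) = -ν (A X)` of `A` on a one-form -/
def act1 (A : V → V) (ν : V → C) : V → C := fun X => -ν (A X)

/-- the action `(A ψ)(X,Y,Z) = -ψ(AX,AY,AZ)` of `A` on a three-form -/
def act3 (A : V → V) (ψ : V → V → V → C) : V → V → V → C :=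
  fun X Y Z => -ψ (A X) (A Y) (A Z)

/-- wedge product of two one-forms -/
def wedge11 (α β : V → C) : V → V → C := fun X Y => α X * β Y - α Y * β X

/-- wedge product of a one-form and a two-form -/
def wedge12 (ν : V → C) (ω : V → V → C) : V → V → V → C :=
  fun X Y Z => ν X * ω Y Z - ν Y * ω X Z + ν Z * ω X Y

/-- wedge product of two two-forms -/
def wedge22 (α β : V → V → C) : V → V → V → V → C := fun X Y Z W =>
  α X Y * β Z W - α X Z * β Y W + α X W * β Y Z
    + α Z W * β X Y - α Y W * β X Z + α Y Z * β X W

/-- a (0,3)-tensor is an alternating three-form -/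
def IsAlt3 (T : V → V → V → C) : Prop :=
  (∀ X Y Z, T Y X Z = -T X Y Z) ∧ (∀ X Y Z, T X Z Y = -T X Y Z)

variable [AddCommGroup V] [Module C V]

/-- `C`-linearity (tensoriality) of a three-form in its first argument -/
def Lin3 (T : V → V → V → C) : Prop :=
  ∀ (f : C) X X' Y Z, T (f • X + X') Y Z = f * T X Y Z + T X' Y Z

/-- `C`-linearity (tensoriality) of a one-form -/
def Lin1 (ν : V → C) : Prop := ∀ (f : C) X X', ν (f • X + X') = f * ν X + ν X'

end ops

section derived

variable {n : ℕ} {C V : Type*} [CommRing C] [Algebra ℝ C] [AddCommGroup V] [Module C V]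
  [Module ℝ V] [IsScalarTower ℝ C V]

variable (M : AQH n C V)

/-- the Kähler form `ω_A(X,Y) = g(X, A Y)` -/
def omega (A : V → V) : V → V → C := fun X Y => M.g X (A Y)

/-- `(∇_X A) Y` -/
def nabA (A : V → V) : V → V → V := fun X Y => M.nab X (A Y) - A (M.nab X Y)

/-- covariant derivative of a 2-form: `(∇_X ψ)(Y,Z)` -/
def nab2 (ψ : V → V → C) : V → V → V → C :=
  fun X Y Z => M.D X (ψ Y Z) - ψ (M.nab X Y) Z - ψ Y (M.nab X Z)

/-- covariant derivative of a 4-form -/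
def nab4 (ψ : V → V → V → V → C) : V → V → V → V → V → C :=
  fun X Y Z W U => M.D X (ψ Y Z W U) - ψ (M.nab X Y) Z W U - ψ Y (M.nab X Z) W U
    - ψ Y Z (M.nab X W) U - ψ Y Z W (M.nab X U)

/-- exterior derivative of a one-form -/
def d1 (ν : V → C) : V → V → C :=
  fun X Y => M.D X (ν Y) - M.D Y (ν X) - ν (M.bracket X Y)

/-- exterior derivative of a two-form -/
def d2 (ψ : V → V → C) : V → V → V → C :=
  fun X Y Z => M.D X (ψ Y Z) - M.D Y (ψ X Z) + M.D Z (ψ X Y)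
    - ψ (M.bracket X Y) Z + ψ (M.bracket X Z) Y - ψ (M.bracket Y Z) X

/-- exterior derivative of a four-form -/
def d4 (ψ : V → V → V → V → C) : V → V → V → V → V → C := fun X Y Z W U =>
  M.D X (ψ Y Z W U) - M.D Y (ψ X Z W U) + M.D Z (ψ X Y W U) - M.D W (ψ X Y Z U)
      + M.D U (ψ X Y Z W)
    - ψ (M.bracket X Y) Z W U + ψ (M.bracket X Z) Y W U - ψ (M.bracket X W) Y Z U
      + ψ (M.bracket X U) Y Z W
    - ψ (M.bracket Y Z) X W U + ψ (M.bracket Y W) X Z U - ψ (M.bracket Y U) X Z W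
    - ψ (M.bracket Z W) X Y U + ψ (M.bracket Z U) X Y W
    - ψ (M.bracket W U) X Y Z

/-- the Nijenhuis tensor `N_A(X,Y)` -/
def nijV (A : V → V) : V → V → V := fun X Y =>
  M.bracket X Y + A (M.bracket (A X) Y) + A (M.bracket X (A Y)) - M.bracket (A X) (A Y)

/-- the Nijenhuis `(0,3)`-tensor `N_A(X,Y,Z) = g(X, N_A(Y,Z))` -/
def nij3 (A : V → V) : V → V → V → C := fun X Y Z => M.g X (M.nijV A Y Z)

/-- the induced inner product of two 2-forms,
`⟨ψ,φ⟩ = (1/2!) ψ(e_i,e_j) φ(e_i,e_j)` -/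
def inner2 (ψ φ : V → V → C) : C :=
  (1/2 : ℝ) • ∑ i, ∑ j, ψ (M.frame i) (M.frame j) * φ (M.frame i) (M.frame j)

/-- the contraction `(Λ_A β)(X) = ⟨X ⌟ β, ω_A⟩` of a three-form -/
def Lam (A : V → V) (β : V → V → V → C) : V → C :=
  fun X => (1/2 : ℝ) •
    ∑ i, ∑ j, β X (M.frame i) (M.frame j) * M.omega A (M.frame i) (M.frame j)

/-- `λ_I(X) = (1/2n) ⟨∇_X ω_J, ω_K⟩` -/
def lambdaI : V → C := fun X =>
  (1/(2*(n:ℝ))) • M.inner2 (fun Y Z => M.nab2 (M.omega M.J) X Y Z) (M.omega M.K)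

/-- `λ_J(X) = (1/2n) ⟨∇_X ω_K, ω_I⟩` -/
def lambdaJ : V → C := fun X =>
  (1/(2*(n:ℝ))) • M.inner2 (fun Y Z => M.nab2 (M.omega M.K) X Y Z) (M.omega M.I)

/-- `λ_K(X) = (1/2n) ⟨∇_X ω_I, ω_J⟩` -/
def lambdaK : V → C := fun X =>
  (1/(2*(n:ℝ))) • M.inner2 (fun Y Z => M.nab2 (M.omega M.I) X Y Z) (M.omega M.J)

/-- codifferential of a two-form -/
def codiff2 (ψ : V → V → C) : V → C := fun Z => -∑ i, M.nab2 ψ (M.frame i) (M.frame i) Z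

/-- codifferential of a four-form -/
def codiff4 (ψ : V → V → V → V → C) : V → V → V → C :=
  fun X Y Z => -∑ i, M.nab4 ψ (M.frame i) (M.frame i) X Y Z

/-- `β_I = J dω_J + K dω_K` -/
def betaI : V → V → V → C := fun X Y Z =>
  act3 M.J (M.d2 (M.omega M.J)) X Y Z + act3 M.K (M.d2 (M.omega M.K)) X Y Z

/-- `β_J = K dω_K + I dω_I` -/
def betaJ : V → V → V → C := fun X Y Z =>
  act3 M.K (M.d2 (M.omega M.K)) X Y Z + act3 M.I (M.d2 (M.omega M.I)) X Y Z

/-- `β_K = I dω_I + J dω_J` -/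
def betaK : V → V → V → C := fun X Y Z =>
  act3 M.I (M.d2 (M.omega M.I)) X Y Z + act3 M.J (M.d2 (M.omega M.J)) X Y Z

/-- the intrinsic torsion
`ξ_X Y = -(1/4) Σ_A A (∇_X A) Y + (1/2) Σ_A λ_A(X) A Y` -/
def xi : V → V → V := fun X Y =>
  (-(1/4 : ℝ)) • (M.I (M.nabA M.I X Y) + M.J (M.nabA M.J X Y) + M.K (M.nabA M.K X Y))
    + (1/2 : ℝ) • (M.lambdaI X • M.I Y + M.lambdaJ X • M.J Y + M.lambdaK X • M.K Y)

/-- the one-form `ν^I_4 = I Λ_I β_I` -/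
def nu4I : V → C := act1 M.I (M.Lam M.I M.betaI)

/-- the one-form `ν^J_4 = J Λ_J β_J` -/
def nu4J : V → C := act1 M.J (M.Lam M.J M.betaJ)

/-- the one-form `ν^K_4 = K Λ_K β_K` -/
def nu4K : V → C := act1 M.K (M.Lam M.K M.betaK)

/-- `ν^I_3`, determined by `J Λ_J β_I = (1/(2n-1)) (ν^I_4 + (2n+1)(n-1) ν^I_3)` -/
def nu3I : V → C := fun X =>
  (1/((2*(n:ℝ)+1) * ((n:ℝ)-1))) •
    ((2*(n:ℝ)-1) • act1 M.J (M.Lam M.J M.betaI) X - M.nu4I X)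

/-- `ν^J_3`, determined by `K Λ_K β_J = (1/(2n-1)) (ν^J_4 + (2n+1)(n-1) ν^J_3)` -/
def nu3J : V → C := fun X =>
  (1/((2*(n:ℝ)+1) * ((n:ℝ)-1))) •
    ((2*(n:ℝ)-1) • act1 M.K (M.Lam M.K M.betaJ) X - M.nu4J X)

/-- `ν^K_3`, determined by `I Λ_I β_K = (1/(2n-1)) (ν^K_4 + (2n+1)(n-1) ν^K_3)` -/
def nu3K : V → C := fun X =>
  (1/((2*(n:ℝ)+1) * ((n:ℝ)-1))) •
    ((2*(n:ℝ)-1) • act1 M.I (M.Lam M.I M.betaK) X - M.nu4K X)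

/-- `β^{(E)}_{3I} = -(1/2) Jν^I_3 ∧ ω_J - (1/2) Kν^I_3 ∧ ω_K + (1/(2n-1)) Iν^I_3 ∧ ω_I` -/
def betaE3I : V → V → V → C := fun X Y Z =>
  (-(1/2:ℝ)) • wedge12 (act1 M.J M.nu3I) (M.omega M.J) X Y Z
    + (-(1/2:ℝ)) • wedge12 (act1 M.K M.nu3I) (M.omega M.K) X Y Z
    + (1/(2*(n:ℝ)-1)) • wedge12 (act1 M.I M.nu3I) (M.omega M.I) X Y Z

def betaE3J : V → V → V → C := fun X Y Z =>
  (-(1/2:ℝ)) • wedge12 (act1 M.K M.nu3J) (M.omega M.K) X Y Z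
    + (-(1/2:ℝ)) • wedge12 (act1 M.I M.nu3J) (M.omega M.I) X Y Z
    + (1/(2*(n:ℝ)-1)) • wedge12 (act1 M.J M.nu3J) (M.omega M.J) X Y Z

def betaE3K : V → V → V → C := fun X Y Z =>
  (-(1/2:ℝ)) • wedge12 (act1 M.I M.nu3K) (M.omega M.I) X Y Z
    + (-(1/2:ℝ)) • wedge12 (act1 M.J M.nu3K) (M.omega M.J) X Y Z
    + (1/(2*(n:ℝ)-1)) • wedge12 (act1 M.K M.nu3K) (M.omega M.K) X Y Z

/-- `β_{4I} = -(1/(2n-1)) Iν^I_4 ∧ ω_I` -/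
def beta4I : V → V → V → C := fun X Y Z =>
  (-(1/(2*(n:ℝ)-1))) • wedge12 (act1 M.I M.nu4I) (M.omega M.I) X Y Z

def beta4J : V → V → V → C := fun X Y Z =>
  (-(1/(2*(n:ℝ)-1))) • wedge12 (act1 M.J M.nu4J) (M.omega M.J) X Y Z

def beta4K : V → V → V → C := fun X Y Z =>
  (-(1/(2*(n:ℝ)-1))) • wedge12 (act1 M.K M.nu4K) (M.omega M.K) X Y Z

/-- `β_I^{(3+K)} = β_I - β^{(E)}_{3I} - β_{4I}` -/
def beta3KI : V → V → V → C := fun X Y Z => M.betaI X Y Z - M.betaE3I X Y Z - M.beta4I X Y Z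

def beta3KJ : V → V → V → C := fun X Y Z => M.betaJ X Y Z - M.betaE3J X Y Z - M.beta4J X Y Z

def beta3KK : V → V → V → C := fun X Y Z => M.betaK X Y Z - M.betaE3K X Y Z - M.beta4K X Y Z

/-- `β_I^{(3)} = (1/6) (2 - 𝓛_J - 𝓛_K) β_I^{(3+K)}` -/
def beta3I : V → V → V → C := fun X Y Z =>
  (1/6:ℝ) • ((2:ℝ) • M.beta3KI X Y Z - calL M.J M.beta3KI X Y Z - calL M.K M.beta3KI X Y Z)

def beta3J : V → V → V → C := fun X Y Z =>
  (1/6:ℝ) • ((2:ℝ) • M.beta3KJ X Y Z - calL M.K M.beta3KJ X Y Z - calL M.I M.beta3KJ X Y Z)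

def beta3K : V → V → V → C := fun X Y Z =>
  (1/6:ℝ) • ((2:ℝ) • M.beta3KK X Y Z - calL M.I M.beta3KK X Y Z - calL M.J M.beta3KK X Y Z)

/-- `β_I^{(K)} = (1/6) (4 + 𝓛_J + 𝓛_K) β_I^{(3+K)}` -/
def betaKI : V → V → V → C := fun X Y Z =>
  (1/6:ℝ) • ((4:ℝ) • M.beta3KI X Y Z + calL M.J M.beta3KI X Y Z + calL M.K M.beta3KI X Y Z)

def betaKJ : V → V → V → C := fun X Y Z =>
  (1/6:ℝ) • ((4:ℝ) • M.beta3KJ X Y Z + calL M.K M.beta3KJ X Y Z + calL M.I M.beta3KJ X Y Z)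

def betaKK : V → V → V → C := fun X Y Z =>
  (1/6:ℝ) • ((4:ℝ) • M.beta3KK X Y Z + calL M.I M.beta3KK X Y Z + calL M.J M.beta3KK X Y Z)

/-- the three-form `ψ^{(3)} = (1/12)(β_I^{(3)} + β_J^{(3)} + β_K^{(3)})` determining `ξ_{33}` -/
def psi3 : V → V → V → C := fun X Y Z =>
  (1/12:ℝ) • (M.beta3I X Y Z + M.beta3J X Y Z + M.beta3K X Y Z)

/-- the three-form `ψ^{(K)} = -(1/48)(β_I^{(K)} + β_J^{(K)} + β_K^{(K)})` determining `ξ_{KH}` -/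
def psiK : V → V → V → C := fun X Y Z =>
  (-(1/48:ℝ)) • (M.betaKI X Y Z + M.betaKJ X Y Z + M.betaKK X Y Z)

/-- the three-form `ψ^{(3)}_I` determining `ξ_{3H}` -/
def psi3I : V → V → V → C := fun X Y Z =>
  (-(1/8:ℝ)) • M.beta3I X Y Z
    + (1/48:ℝ) • ((3:ℝ) • (M.beta3I X Y Z + M.beta3J X Y Z + M.beta3K X Y Z)
        + calL M.I (fun a b c => M.beta3I a b c + M.beta3J a b c + M.beta3K a b c) X Y Z)

def psi3J : V → V → V → C := fun X Y Z =>
  (-(1/8:ℝ)) • M.beta3J X Y Z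
    + (1/48:ℝ) • ((3:ℝ) • (M.beta3I X Y Z + M.beta3J X Y Z + M.beta3K X Y Z)
        + calL M.J (fun a b c => M.beta3I a b c + M.beta3J a b c + M.beta3K a b c) X Y Z)

def psi3K : V → V → V → C := fun X Y Z =>
  (-(1/8:ℝ)) • M.beta3K X Y Z
    + (1/48:ℝ) • ((3:ℝ) • (M.beta3I X Y Z + M.beta3J X Y Z + M.beta3K X Y Z)
        + calL M.K (fun a b c => M.beta3I a b c + M.beta3J a b c + M.beta3K a b c) X Y Z)

/-- the three-form `ψ^{(K)}_I` determining `ξ_{K3}` -/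
def psiKI : V → V → V → C := fun X Y Z =>
  (-(1/2:ℝ)) • M.betaKI X Y Z
    + (1/6:ℝ) • (M.betaKI X Y Z + M.betaKJ X Y Z + M.betaKK X Y Z)

def psiKJ : V → V → V → C := fun X Y Z =>
  (-(1/2:ℝ)) • M.betaKJ X Y Z
    + (1/6:ℝ) • (M.betaKI X Y Z + M.betaKJ X Y Z + M.betaKK X Y Z)

def psiKK : V → V → V → C := fun X Y Z =>
  (-(1/2:ℝ)) • M.betaKK X Y Z
    + (1/6:ℝ) • (M.betaKI X Y Z + M.betaKJ X Y Z + M.betaKK X Y Z)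

/-- the one-form `θ^ξ` determining `ξ_{EH}`,
defined by `(6/n)(2n+1)(n-1) θ^ξ(X) = -⟨ξ_{e_i} e_i, X⟩` -/
def thetaXi : V → C := fun X =>
  (-((n:ℝ)/(6*(2*(n:ℝ)+1)*((n:ℝ)-1)))) • ∑ i, M.g (M.xi (M.frame i) (M.frame i)) X

/-- the local one-form `θ^ξ_I`, defined by `(2/n)(2n+1)(n-1) θ^ξ_I(X) = -⟨I ξ_{e_i} I e_i, X⟩` -/
def thetaXiI : V → C := fun X =>
  (-((n:ℝ)/(2*(2*(n:ℝ)+1)*((n:ℝ)-1)))) •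
    ∑ i, M.g (M.I (M.xi (M.frame i) (M.I (M.frame i)))) X

def thetaXiJ : V → C := fun X =>
  (-((n:ℝ)/(2*(2*(n:ℝ)+1)*((n:ℝ)-1)))) •
    ∑ i, M.g (M.J (M.xi (M.frame i) (M.J (M.frame i)))) X

def thetaXiK : V → C := fun X =>
  (-((n:ℝ)/(2*(2*(n:ℝ)+1)*((n:ℝ)-1)))) •
    ∑ i, M.g (M.K (M.xi (M.frame i) (M.K (M.frame i)))) X

/-- `α_I = -λ_I ⊗ g + (1/2)(J_(2) - J_(3)) ∇ω_K` -/
def alphaI : V → V → V → C := fun X Y Z =>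
  -(M.lambdaI X * M.g Y Z)
    + (1/2:ℝ) • (-(M.nab2 (M.omega M.K) X (M.J Y) Z) + M.nab2 (M.omega M.K) X Y (M.J Z))

def alphaJ : V → V → V → C := fun X Y Z =>
  -(M.lambdaJ X * M.g Y Z)
    + (1/2:ℝ) • (-(M.nab2 (M.omega M.I) X (M.K Y) Z) + M.nab2 (M.omega M.I) X Y (M.K Z))

def alphaK : V → V → V → C := fun X Y Z =>
  -(M.lambdaK X * M.g Y Z)
    + (1/2:ℝ) • (-(M.nab2 (M.omega M.J) X (M.I Y) Z) + M.nab2 (M.omega M.J) X Y (M.I Z))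

/-- the one-form `η_I(X) = α_I(e_i; e_i, X)` -/
def etaI : V → C := fun X => ∑ i, M.alphaI (M.frame i) (M.frame i) X

def etaJ : V → C := fun X => ∑ i, M.alphaJ (M.frame i) (M.frame i) X

def etaK : V → C := fun X => ∑ i, M.alphaK (M.frame i) (M.frame i) X

/-- the fundamental four-form `Ω = Σ_A ω_A ∧ ω_A` -/
def Omega4 : V → V → V → V → C := fun X Y Z W =>
  wedge22 (M.omega M.I) (M.omega M.I) X Y Z W
    + wedge22 (M.omega M.J) (M.omega M.J) X Y Z W
    + wedge22 (M.omega M.K) (M.omega M.K) X Y Z W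

/-- the one-form `θ^{d*Ω} = (1/3) Σ_A A Λ_A d*Ω` -/
def thetaDOmega : V → C := fun X =>
  (1/3:ℝ) • (act1 M.I (M.Lam M.I (M.codiff4 M.Omega4)) X
    + act1 M.J (M.Lam M.J (M.codiff4 M.Omega4)) X
    + act1 M.K (M.Lam M.K (M.codiff4 M.Omega4)) X)

/-- the vector-valued torsion: `g(W, T(X,Y)) = T(W,X,Y)` -/
def Tvec (T : V → V → V → C) : V → V → V := fun X Y => ∑ i, T (M.frame i) X Y • M.frame i

/-- the connection `∇ + (1/2) T` associated to a torsion (0,3)-tensor `T` -/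
def nabT (T : V → V → V → C) : V → V → V := fun X Y => M.nab X Y + (1/2:ℝ) • M.Tvec T X Y

/-- a connection is metric -/
def MetricConn (nab' : V → V → V) : Prop :=
  ∀ X Y Z, M.D X (M.g Y Z) = M.g (nab' X Y) Z + M.g Y (nab' X Z)

/-- a connection is quaternionic, with associated local one-forms `γ_I, γ_J, γ_K`:
`∇'_X I = γ_K(X) J - γ_J(X) K`, and cyclically -/
def QuatConn (nab' : V → V → V) (γI γJ γK : V → C) : Prop :=
  (∀ X Y, nab' X (M.I Y) - M.I (nab' X Y) = γK X • M.J Y - γJ X • M.K Y) ∧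
  (∀ X Y, nab' X (M.J Y) - M.J (nab' X Y) = γI X • M.K Y - γK X • M.I Y) ∧
  (∀ X Y, nab' X (M.K Y) - M.K (nab' X Y) = γJ X • M.I Y - γI X • M.J Y)

/-- the HKT condition: `I, J, K` integrable and there is a metric connection
`∇ + (1/2)T` with totally skew torsion making `I, J, K` parallel -/
def IsHKT : Prop :=
  (∀ X Y, M.nijV M.I X Y = 0) ∧ (∀ X Y, M.nijV M.J X Y = 0) ∧
  (∀ X Y, M.nijV M.K X Y = 0) ∧
  ∃ T : V → V → V → C, IsAlt3 T ∧ Lin3 T ∧ M.MetricConn (M.nabT T) ∧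
    (∀ X Y, M.nabT T X (M.I Y) = M.I (M.nabT T X Y)) ∧
    (∀ X Y, M.nabT T X (M.J Y) = M.J (M.nabT T X Y)) ∧
    (∀ X Y, M.nabT T X (M.K Y) = M.K (M.nabT T X Y))

/-- membership of a three-form in `KH`: type `{2,1}` for each `A` and `Λ_A ψ = 0` -/
def InKH3 (ψ : V → V → V → C) : Prop :=
  IsAlt3 ψ ∧ Lin3 ψ ∧
  calL M.I ψ = ψ ∧ calL M.J ψ = ψ ∧ calL M.K ψ = ψ ∧
  M.Lam M.I ψ = 0 ∧ M.Lam M.J ψ = 0 ∧ M.Lam M.K ψ = 0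

/-- the `(0,3)`-tensor of the `KH`-component of the torsion determined by `ψ^{(K)}`:
`3ψ - Σ_A A_(23) ψ` -/
def xiKH3 (ψ : V → V → V → C) : V → V → V → C := fun X Y Z =>
  (3:ℝ) • ψ X Y Z - (op23 M.I ψ X Y Z + op23 M.J ψ X Y Z + op23 M.K ψ X Y Z)

/-- the `(0,3)`-tensor of the `EH`-component of the torsion determined by the
one-form `θ`: `3 e_i ⊗ e_i ∧ θ - Σ_A (e_i ⊗ A e_i ∧ A θ + (2/n) A θ ⊗ ω_A)` -/
def xiEH3 (θ : V → C) : V → V → V → C := fun X Y Z =>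
  (3:ℝ) • ∑ i, M.g (M.frame i) X *
      (M.g (M.frame i) Y * θ Z - M.g (M.frame i) Z * θ Y)
  - ((∑ i, M.g (M.frame i) X *
        (M.g (M.I (M.frame i)) Y * act1 M.I θ Z - M.g (M.I (M.frame i)) Z * act1 M.I θ Y))
    + (∑ i, M.g (M.frame i) X *
        (M.g (M.J (M.frame i)) Y * act1 M.J θ Z - M.g (M.J (M.frame i)) Z * act1 M.J θ Y))
    + (∑ i, M.g (M.frame i) X *
        (M.g (M.K (M.frame i)) Y * act1 M.K θ Z - M.g (M.K (M.frame i)) Z * act1 M.K θ Y)))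
  - (2/(n:ℝ)) • (act1 M.I θ X * M.omega M.I Y Z + act1 M.J θ X * M.omega M.J Y Z
      + act1 M.K θ X * M.omega M.K Y Z)

/-- the intrinsic torsion lies in `(K+E)H`: it is the sum of a `KH`-tensor and an
`EH`-tensor as described in §3 of the paper -/
def inKEH : Prop :=
  ∃ (ψ : V → V → V → C) (θ : V → C), M.InKH3 ψ ∧ Lin1 θ ∧
    ∀ X Y Z, M.g Y (M.xi X Z) = M.xiKH3 ψ X Y Z + M.xiEH3 θ X Y Z

end derived

end AQH

/-!
Let `s X Y Z = g (∇^q_X Y - ∇_X Y, Z)`. Torsion-freeness makes `s` symmetric in `X, Y`, and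
compatibility of `g` makes the symmetrisation of `s X` in its last two arguments a Hermitian form.
Together these force the three imaginary components of `s` to be a single Hermitian-valued form
`κ`, evaluated at `I X`, `J X` and `K X`; hence `g (ξ_X Z, Y) = Σ_A k (A X) (A Y) Z` with each `k X`
a trace-free Hermitian form.

Dimension eight enters through the Cayley–Hamilton identity for `2 × 2` quaternionic Hermitian
matrices: a trace-free Hermitian form squares to a multiple of the metric. Polarising this and
contracting it against `k` shows that, once the contraction of `k` (the `EH`-part `θ`) has been
split off, `k` itself is recovered from `Σ_A k (A X) (A Y) Z`. The latter is then determined by its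
cyclic sum, which is a three-form in `KH`, so no `S³H`-part remains.
-/

namespace AQH

open LinearMap (BilinForm)

theorem eq_zero_of_eq_neg {C : Type*} [CommRing C] [Invertible (2 : C)] {x : C} (h : x = -x) :
    x = 0 :=
  (isUnit_of_invertible (2 : C)).mul_right_eq_zero.mp (by linear_combination h)

theorem eq_zero_of_symm_of_skew {C V : Type*} [CommRing C] [Invertible (2 : C)]
    {R : V → V → V → C} (symm : ∀ X Y Z, R X Y Z = R Y X Z)
    (skew : ∀ X Y Z, R X Z Y = -R X Y Z) (X Y Z : V) : R X Y Z = 0 :=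
  eq_zero_of_eq_neg <| by
    linear_combination symm X Y Z + skew Y Z X - symm Y Z X - skew Z X Y + symm Z X Y + skew X Y Z

theorem isUnit_four {C : Type*} [CommRing C] [Invertible (2 : C)] : IsUnit (4 : C) := by
  convert (isUnit_of_invertible (2 : C)).pow 2
  norm_num

section Orthogonality

variable {C V ι : Type*} [CommRing C] [AddCommGroup V] [Module C V]

theorem pow_card_smul_mul_comm_sub [Fintype ι] [DecidableEq ι] {A B : Matrix ι ι C} {c : C}
    (h : A * B = c • 1) : c ^ Fintype.card ι • (B * A - c • 1) = 0 := by
  have annihilated : A * (B * A - c • 1) = 0 := by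
    rw [mul_sub, ← mul_assoc, h]; simp
  have det_annihilates : A.det • (B * A - c • 1) = 0 := by
    rw [← one_mul (B * A - c • 1), ← smul_mul_assoc, ← Matrix.adjugate_mul, mul_assoc,
      annihilated, mul_zero]
  have det_mul : B.det * A.det = c ^ Fintype.card ι := by
    rw [mul_comm, ← Matrix.det_mul, h, Matrix.det_smul, Matrix.det_one, mul_one]
  rw [← det_mul, mul_smul, det_annihilates, smul_zero]

theorem eq_zero_of_pow_smul_eq_zero {x : V} [Fintype ι] {c : ι → C} (hc : IsUnit (∑ i, c i))
    (N : ℕ) (h : ∀ i, c i ^ N • x = 0) : x = 0 := by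
  have span_top : Ideal.span (Set.range c) = ⊤ :=
    Ideal.eq_top_of_isUnit_mem _ (Ideal.sum_mem _ fun i _ => Ideal.subset_span ⟨i, rfl⟩) hc
  have pow_span_le : Ideal.span ((· ^ N) '' Set.range c) ≤ Ideal.torsionOf C V x := by
    rw [Ideal.span_le]
    rintro _ ⟨_, ⟨i, rfl⟩, rfl⟩
    exact h i
  have one_mem := pow_span_le (Ideal.span_pow_eq_top _ span_top N ▸ Submodule.mem_top (x := 1))
  simpa using one_mem

/-- A finite family which is orthonormal for `g` and expands every vector. -/
structure IsOrthonormalFrame [Fintype ι] [DecidableEq ι] (g : BilinForm C V) (e : ι → V) :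
    Prop where
  orthonormal : ∀ i j, g (e i) (e j) = if i = j then 1 else 0
  expansion : ∀ X, ∑ i, g X (e i) • e i = X

namespace IsOrthonormalFrame

variable [Fintype ι] [DecidableEq ι] {g : BilinForm C V} {e : ι → V}

theorem norm_eq_one (he : IsOrthonormalFrame g e) (i : ι) : g (e i) (e i) = 1 := by
  simp [he.orthonormal]

theorem sum_mul_apply (he : IsOrthonormalFrame g e) (φ : V →ₗ[C] C) (X : V) :
    ∑ i, g X (e i) * φ (e i) = φ X := by
  conv_rhs => rw [← he.expansion X, map_sum]
  simp only [map_smul, smul_eq_mul]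

theorem trace_metric (he : IsOrthonormalFrame g e) :
    ∑ i, g (e i) (e i) = Fintype.card ι := by
  simp [he.norm_eq_one]

theorem linearMap_ext {W : Type*} [AddCommGroup W] [Module C W] (he : IsOrthonormalFrame g e)
    {f f' : V →ₗ[C] W} (h : ∀ i, f (e i) = f' (e i)) : f = f' := by
  ext X
  rw [← he.expansion X]
  simp only [map_sum, map_smul, h]

theorem eq_zero_of_apply_eq_zero (he : IsOrthonormalFrame g e) {X : V}
    (h : ∀ i, g X (e i) = 0) : X = 0 := by
  rw [← he.expansion X]
  simp [h]

theorem sum_sum_mul (he : IsOrthonormalFrame g e) (b : BilinForm C V) (A : V →ₗ[C] V) :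
    ∑ i, ∑ j, b (e i) (e j) * g (A (e j)) (e i) = ∑ j, b (A (e j)) (e j) := by
  rw [Finset.sum_comm]
  refine Finset.sum_congr rfl fun j _ => ?_
  simp_rw [mul_comm (b _ _)]
  exact he.sum_mul_apply (b.flip (e j)) (A (e j))

theorem trace_skew (he : IsOrthonormalFrame g e) (b : BilinForm C V) {A : V →ₗ[C] V}
    (hA : ∀ X Y, g (A X) Y = -g (A Y) X) :
    ∑ i, b (A (e i)) (e i) = -∑ i, b (e i) (A (e i)) := by
  rw [← he.sum_sum_mul b A, ← Finset.sum_neg_distrib]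
  refine Finset.sum_congr rfl fun i _ => ?_
  rw [← he.sum_mul_apply (b (e i)) (A (e i)), ← Finset.sum_neg_distrib]
  exact Finset.sum_congr rfl fun j _ => by rw [hA]; ring

theorem card_pow_smul_sum_sub (he : IsOrthonormalFrame g e) {κ : Type*} [Fintype κ]
    [DecidableEq κ] (hκ : Fintype.card κ = Fintype.card ι) {x : κ → V} {w : κ → C} {c : C}
    (hx : ∀ a b, w a * g (x a) (x b) = if a = b then c else 0) (X : V) :
    c ^ Fintype.card ι • (∑ a, (w a * g (x a) X) • x a - c • X) = 0 := by
  let σ : κ ≃ ι := Fintype.equivOfCardEq hκ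
  let A : Matrix ι ι C := .of fun a i => w (σ.symm a) * g (x (σ.symm a)) (e i)
  let B : Matrix ι ι C := .of fun i a => g (x (σ.symm a)) (e i)
  have hAB : A * B = c • 1 := by
    ext a b
    have := he.sum_mul_apply (g (x (σ.symm a))) (x (σ.symm b))
    simp only [A, B, Matrix.mul_apply, Matrix.of_apply, mul_assoc, ← Finset.mul_sum,
      Matrix.smul_apply, Matrix.one_apply, smul_eq_mul, mul_ite, mul_one, mul_zero,
      mul_comm (g (x (σ.symm a)) _), this, hx, EmbeddingLike.apply_eq_iff_eq]
  have entry (i j : ι) : c ^ Fintype.card ι *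
      (∑ a, g (x a) (e i) * (w a * g (x a) (e j)) - c * g (e j) (e i)) = 0 := by
    have := congrFun₂ (pow_card_smul_mul_comm_sub hAB) i j
    simpa only [A, B, Matrix.smul_apply, Matrix.sub_apply, Matrix.mul_apply, Matrix.of_apply,
      Matrix.one_apply, Matrix.zero_apply, smul_eq_mul, he.orthonormal, eq_comm (a := i),
      σ.symm.sum_comp fun a => g (x a) (e i) * (w a * g (x a) (e j))] using this
  let defect : V →ₗ[C] V := c ^ Fintype.card ι •
    (∑ a, (w a • g (x a)).smulRight (x a) - c • LinearMap.id)
  have defect_frame (j : ι) : defect (e j) = 0 := he.eq_zero_of_apply_eq_zero fun i => by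
    simpa [defect, mul_comm, mul_left_comm] using entry i j
  have defect_eq_zero : defect = 0 := he.linearMap_ext defect_frame
  simpa [defect] using congrArg (· X) defect_eq_zero

theorem apply_self_eq_zero_of_isUnit [Invertible (2 : C)] (he : IsOrthonormalFrame g e)
    {B : BilinForm C V} (hB : ∀ Z, IsUnit (g Z Z) → B Z Z = 0)
    (Z : V) : B Z Z = 0 := by
  have self_frame (i : ι) : B (e i) (e i) = 0 := hB _ (by simp [he.norm_eq_one])
  have skew_frame (i j : ι) : B (e i) (e j) = -B (e j) (e i) := by
    by_cases hij : i = j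
    · simp [hij, self_frame]
    · have norm_eq_two : g (e i + e j) (e i + e j) = 2 := by
        simp [he.orthonormal, hij, Ne.symm hij, one_add_one_eq_two]
      have := hB (e i + e j) (norm_eq_two ▸ isUnit_of_invertible 2)
      simp only [map_add, LinearMap.add_apply, self_frame] at this
      linear_combination this
  have skew : B = -LinearMap.flip B :=
    he.linearMap_ext fun i => he.linearMap_ext fun j => skew_frame i j
  exact eq_zero_of_eq_neg (congrArg (· Z Z) skew)

end IsOrthonormalFrame
end Orthogonality

section Quaternionic

variable {C V : Type*} [CommRing C] [AddCommGroup V] [Module C V]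

/-- The multiplication table of the imaginary quaternion units. -/
structure IsQuaternionic (I J K : Module.End C V) : Prop where
  I_I : ∀ X, I (I X) = -X
  J_J : ∀ X, J (J X) = -X
  I_J : ∀ X, I (J X) = K X
  J_I : ∀ X, J (I X) = -K X

/-- Symmetric bilinear forms for which `I, J, K` are skew; when the squares are `-1` this is the
usual compatibility `b (A Y) (A Z) = b Y Z`. -/
structure IsHermitianForm (I J K : Module.End C V) (b : BilinForm C V) : Prop where
  symm : ∀ Y Z, b Y Z = b Z Y
  skew_I : ∀ Y Z, b Y (I Z) = -b (I Y) Z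
  skew_J : ∀ Y Z, b Y (J Z) = -b (J Y) Z
  skew_K : ∀ Y Z, b Y (K Z) = -b (K Y) Z

/-- The basis `1, I, J, K` of the quaternions acting on `V`. -/
def quatUnits (I J K : Module.End C V) : Fin 4 → Module.End C V := ![1, I, J, K]

variable {I J K : Module.End C V}

namespace IsQuaternionic

theorem J_K (h : IsQuaternionic I J K) (X : V) : J (K X) = I X := by
  rw [← h.I_J, h.J_I, ← h.I_J, h.J_J, map_neg, neg_neg]

theorem K_J (h : IsQuaternionic I J K) (X : V) : K (J X) = -I X := by
  rw [← h.I_J, h.J_J, map_neg]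

theorem I_K (h : IsQuaternionic I J K) (X : V) : I (K X) = -J X := by
  rw [← h.I_J, h.I_I]

theorem K_I (h : IsQuaternionic I J K) (X : V) : K (I X) = J X := by
  rw [← h.I_J, h.J_I, map_neg, h.I_K, neg_neg]

theorem K_K (h : IsQuaternionic I J K) (X : V) : K (K X) = -X := by
  rw [← h.I_J, h.J_K, h.I_I]

theorem cyc (h : IsQuaternionic I J K) : IsQuaternionic J K I :=
  ⟨h.J_J, h.K_K, h.J_K, h.K_J⟩

end IsQuaternionic

/-- The operator `∑ A₍₁₂₎` on trilinear forms. -/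
def quatTwist (I J K : Module.End C V) (k : V →ₗ[C] BilinForm C V) : V →ₗ[C] BilinForm C V :=
  k.compl₁₂ I I + k.compl₁₂ J J + k.compl₁₂ K K

theorem quatTwist_apply (k : V →ₗ[C] BilinForm C V) (X Y Z : V) :
    quatTwist I J K k X Y Z = k (I X) (I Y) Z + k (J X) (J Y) Z + k (K X) (K Y) Z := rfl

/-- The sum of a trilinear form over the cyclic permutations of its arguments. -/
def cyclicSum (k : V →ₗ[C] BilinForm C V) : V →ₗ[C] BilinForm C V :=
  k + ((LinearMap.lflip (R₀ := C)).toLinearMap ∘ₗ k).flip +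
    (LinearMap.lflip (R₀ := C)).toLinearMap ∘ₗ k.flip

theorem cyclicSum_apply (k : V →ₗ[C] BilinForm C V) (X Y Z : V) :
    cyclicSum k X Y Z = k X Y Z + k Y Z X + k Z X Y := rfl

namespace IsHermitianForm

variable {b : BilinForm C V}

theorem cyc (hb : IsHermitianForm I J K b) : IsHermitianForm J K I b :=
  ⟨hb.symm, hb.skew_J, hb.skew_K, hb.skew_I⟩

theorem apply_quatUnits_left (hb : IsHermitianForm I J K b) (a : Fin 4) (Y Z : V) :
    b (quatUnits I J K a Y) Z = b Y (quatUnits (-I) (-J) (-K) a Z) := by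
  fin_cases a <;> simp [quatUnits, hb.skew_I, hb.skew_J, hb.skew_K]

variable [Invertible (2 : C)]

theorem apply_I_self (hb : IsHermitianForm I J K b) (Z : V) : b (I Z) Z = 0 :=
  eq_zero_of_eq_neg <| by rw [← hb.skew_I, hb.symm]

theorem apply_quatUnits (h : IsQuaternionic I J K) (hb : IsHermitianForm I J K b) (Z : V)
    (a a' : Fin 4) : b (quatUnits I J K a Z) (quatUnits I J K a' Z) =
      if a = a' then b Z Z else 0 := by
  have hI := hb.apply_I_self Z
  have hJ := hb.cyc.apply_I_self Z
  have hK := hb.cyc.cyc.apply_I_self Z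
  fin_cases a <;> fin_cases a' <;>
    simp [quatUnits, hb.skew_I, hb.skew_J, hb.skew_K, h.I_I, h.J_J, h.K_K, h.I_J, h.J_I, h.J_K,
      h.K_J, h.K_I, h.I_K, hI, hJ, hK]

theorem apply_sum_quatUnits_self (h : IsQuaternionic I J K) (hb : IsHermitianForm I J K b)
    (r : Fin 4 → C) (Z : V) :
    b (∑ a, r a • quatUnits I J K a Z) (∑ a, r a • quatUnits I J K a Z) =
      (∑ a, r a ^ 2) * b Z Z := by
  simp only [map_sum, map_smul, LinearMap.sum_apply, LinearMap.smul_apply,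
    hb.apply_quatUnits h, smul_eq_mul, mul_ite, mul_zero, Finset.sum_ite_eq', Finset.sum_mul,
    Finset.mem_univ, if_true, pow_two, mul_assoc]

end IsHermitianForm

section CayleyHamilton

variable {ι : Type*} [Fintype ι] [DecidableEq ι] {g b : BilinForm C V} {e : ι → V}

theorem apply_quatUnits_of_orthogonal (h : IsQuaternionic I J K) (hb : IsHermitianForm I J K b)
    {Z f : V} (hf : ∀ a, b (quatUnits I J K a Z) f = 0) (a a' : Fin 4) :
    b (quatUnits I J K a Z) (quatUnits I J K a' f) = 0 := by
  have h_one := hf 0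
  have hI := hf 1
  have hJ := hf 2
  have hK := hf 3
  simp only [quatUnits, Matrix.cons_val] at h_one hI hJ hK
  fin_cases a <;> fin_cases a' <;>
    simp_all [quatUnits, hb.skew_I, hb.skew_J, hb.skew_K, h.I_I, h.J_J, h.K_K, h.I_J, h.J_I,
      h.J_K, h.K_J, h.K_I, h.I_K]

variable [Invertible (2 : C)]

theorem pow_smul_quaternionic_expansion (h : IsQuaternionic I J K)
    (hg : IsHermitianForm I J K g) (he : IsOrthonormalFrame g e) (hι : Fintype.card ι = 8)
    {Z f : V} (hf : ∀ a, g (quatUnits I J K a Z) f = 0) (X : V) :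
    (g Z Z * g f f) ^ 8 • (g f f • ∑ a, g (quatUnits I J K a Z) X • quatUnits I J K a Z +
      g Z Z • ∑ a, g (quatUnits I J K a f) X • quatUnits I J K a f - (g Z Z * g f f) • X) = 0 := by
  have orthogonal : ∀ a b : Fin 4 ⊕ Fin 4,
      Sum.elim (fun _ => g f f) (fun _ => g Z Z) a *
        g (Sum.elim (quatUnits I J K · Z) (quatUnits I J K · f) a)
          (Sum.elim (quatUnits I J K · Z) (quatUnits I J K · f) b) =
        if a = b then g Z Z * g f f else 0 := by
    rintro (a | a) (b | b) <;>
      simp [hg.apply_quatUnits h, apply_quatUnits_of_orthogonal h hg hf, mul_comm (g f f),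
        hg.symm (quatUnits I J K _ f) (quatUnits I J K _ Z)]
  have := he.card_pow_smul_sum_sub (by simp [hι]) orthogonal X
  simpa only [hι, Fintype.sum_sum_type, Sum.elim_inl, Sum.elim_inr, mul_smul, ← Finset.smul_sum]
    using this

theorem pow_mul_apply_self_add (h : IsQuaternionic I J K) (hg : IsHermitianForm I J K g)
    (he : IsOrthonormalFrame g e) (hι : Fintype.card ι = 8) (hb : IsHermitianForm I J K b)
    (htr : ∑ i, b (e i) (e i) = 0) {Z f : V} (hf : ∀ a, g (quatUnits I J K a Z) f = 0) :
    (g Z Z * g f f) ^ 8 * (g f f * b Z Z + g Z Z * b f f) = 0 := by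
  have expansion (i : ι) :=
    congrArg (b · (e i)) (pow_smul_quaternionic_expansion h hg he hι hf (e i))
  have trace_projection (W : V) :
      ∑ i, ∑ a, g (quatUnits I J K a W) (e i) * b (quatUnits I J K a W) (e i) = 4 * b W W := by
    rw [Finset.sum_comm]
    simp [he.sum_mul_apply, hb.apply_quatUnits h]
  have sum_expansion := Finset.sum_congr (rfl : Finset.univ = Finset.univ) fun i _ => expansion i
  simp only [map_smul, map_sub, map_add, map_sum, map_zero, LinearMap.smul_apply,
    LinearMap.sub_apply, LinearMap.add_apply, LinearMap.sum_apply, LinearMap.zero_apply,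
    smul_eq_mul, ← Finset.mul_sum, Finset.sum_sub_distrib, Finset.sum_add_distrib,
    trace_projection, htr, Finset.sum_const_zero, mul_zero, sub_zero] at sum_expansion
  refine isUnit_four.mul_right_eq_zero.mp ?_
  linear_combination sum_expansion

theorem pow_mul_apply_self_sub (h : IsQuaternionic I J K) (hg : IsHermitianForm I J K g)
    (he : IsOrthonormalFrame g e) (hι : Fintype.card ι = 8) (hb : IsHermitianForm I J K b)
    {Z f Y : V} (hf : ∀ a, g (quatUnits I J K a Z) f = 0)
    (hY : ∀ a, g (quatUnits I J K a Z) Y = 0) :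
    (g Z Z * g f f) ^ 18 * (g f f * b Y Y - b f f * g Y Y) = 0 := by
  set c := g Z Z * g f f
  set P := ∑ a, g (quatUnits I J K a f) Y • quatUnits I J K a f
  have expansion : c ^ 9 • Y = (c ^ 8 * g Z Z) • P := by
    have := pow_smul_quaternionic_expansion h hg he hι hf Y
    simp only [hY, zero_smul, Finset.sum_const_zero, smul_zero, zero_add, smul_sub,
      sub_eq_zero] at this
    rw [mul_smul, this, smul_smul, pow_succ]
  have apply_expansion (b : BilinForm C V) :
      c ^ 18 * b Y Y = (c ^ 8 * g Z Z) ^ 2 * b P P := by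
    have := congrArg (fun X => b X X) expansion
    simp only [map_smul, LinearMap.smul_apply, smul_eq_mul] at this
    linear_combination this
  have hbP := hb.apply_sum_quatUnits_self h (fun a => g (quatUnits I J K a f) Y) f
  have hgP := hg.apply_sum_quatUnits_self h (fun a => g (quatUnits I J K a f) Y) f
  linear_combination g f f * apply_expansion b - b f f * apply_expansion g +
    (c ^ 8 * g Z Z) ^ 2 * (g f f * hbP - b f f * hgP)

theorem pow_mul_apply_self_add_of_orthogonal (h : IsQuaternionic I J K)
    (hg : IsHermitianForm I J K g) (he : IsOrthonormalFrame g e) (hι : Fintype.card ι = 8)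
    (hb : IsHermitianForm I J K b) (htr : ∑ i, b (e i) (e i) = 0) {Z f Y : V}
    (hf : ∀ a, g (quatUnits I J K a Z) f = 0) (hY : ∀ a, g (quatUnits I J K a Z) Y = 0) :
    (g Z Z * g f f) ^ 19 * (g Z Z * b Y Y + g Y Y * b Z Z) = 0 := by
  have hZf := pow_mul_apply_self_add h hg he hι hb htr hf
  have hfY := pow_mul_apply_self_sub h hg he hι hb hf hY
  linear_combination g Z Z * (g Z Z * hfY + (g Z Z * g f f) ^ 10 * g Y Y * hZf)

/-- The orthogonal projection off the quaternionic line of `Z`, scaled by `g Z Z` to avoid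
division. -/
def projOffLine (g : BilinForm C V) (I J K : Module.End C V) (Z X : V) : V :=
  g Z Z • X - ∑ a, g (quatUnits I J K a Z) X • quatUnits I J K a Z

theorem apply_quatUnits_projOffLine (h : IsQuaternionic I J K) (hg : IsHermitianForm I J K g)
    (Z X : V) (a : Fin 4) : g (quatUnits I J K a Z) (projOffLine g I J K Z X) = 0 := by
  simp [projOffLine, hg.apply_quatUnits h, mul_comm]

theorem apply_projOffLine_self (h : IsQuaternionic I J K) (hb : IsHermitianForm I J K b)
    (Z X : V) : b (projOffLine g I J K Z X) (projOffLine g I J K Z X) =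
      g Z Z ^ 2 * b X X - 2 * g Z Z * ∑ a, g (quatUnits I J K a Z) X * b (quatUnits I J K a Z) X +
        (∑ a, g (quatUnits I J K a Z) X ^ 2) * b Z Z := by
  have hP := hb.apply_sum_quatUnits_self h (fun a => g (quatUnits I J K a Z) X) Z
  have hXP : b X (∑ a, g (quatUnits I J K a Z) X • quatUnits I J K a Z) =
      ∑ a, g (quatUnits I J K a Z) X * b (quatUnits I J K a Z) X := by
    simp only [map_sum, map_smul, smul_eq_mul]
    exact Finset.sum_congr rfl fun a _ => by rw [hb.symm X]
  have hPX := hXP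
  rw [hb.symm] at hPX
  simp only [projOffLine, map_sub, LinearMap.sub_apply, map_smul, LinearMap.smul_apply,
    smul_eq_mul, hP, hXP, hPX]
  ring

theorem sum_apply_projOffLine_self (h : IsQuaternionic I J K) (hg : IsHermitianForm I J K g)
    (he : IsOrthonormalFrame g e) (hι : Fintype.card ι = 8) (Z : V) :
    ∑ i, g (projOffLine g I J K Z (e i)) (projOffLine g I J K Z (e i)) = 4 * g Z Z ^ 2 := by
  have trace_square :
      ∑ i, ∑ a, g (quatUnits I J K a Z) (e i) * g (quatUnits I J K a Z) (e i) = 4 * g Z Z := by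
    rw [Finset.sum_comm]
    simp [he.sum_mul_apply, hg.apply_quatUnits h]
  simp only [apply_projOffLine_self h hg, Finset.sum_add_distrib, Finset.sum_sub_distrib,
    ← Finset.mul_sum, ← Finset.sum_mul, he.trace_metric, hι, pow_two, trace_square]
  push_cast
  ring

theorem cayleyHamilton_of_isUnit (h : IsQuaternionic I J K) (hg : IsHermitianForm I J K g)
    (he : IsOrthonormalFrame g e) (hι : Fintype.card ι = 8) (hb : IsHermitianForm I J K b)
    (htr : ∑ i, b (e i) (e i) = 0) {Z : V} (hZ : IsUnit (g Z Z)) (Y : V) :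
    g Z Z * b Y Y + g Y Y * b Z Z =
      2 * ∑ a, g (quatUnits I J K a Z) Y * b (quatUnits I J K a Z) Y := by
  have orthogonal (X : V) := apply_quatUnits_projOffLine h hg Z X
  have unit_sum : IsUnit (∑ i, g Z Z *
      g (projOffLine g I J K Z (e i)) (projOffLine g I J K Z (e i))) := by
    rw [← Finset.mul_sum, sum_apply_projOffLine_self h hg he hι]
    exact hZ.mul (isUnit_four.mul (hZ.pow 2))
  have projected := eq_zero_of_pow_smul_eq_zero unit_sum 19 fun i =>
    pow_mul_apply_self_add_of_orthogonal h hg he hι hb htr (orthogonal (e i)) (orthogonal Y)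
  rw [apply_projOffLine_self h hb, apply_projOffLine_self h hg] at projected
  refine sub_eq_zero.mp ((hZ.pow 2).mul_right_eq_zero.mp ?_)
  simp only [← pow_two] at projected
  linear_combination projected

theorem cayleyHamilton (h : IsQuaternionic I J K) (hg : IsHermitianForm I J K g)
    (he : IsOrthonormalFrame g e) (hι : Fintype.card ι = 8) (hb : IsHermitianForm I J K b)
    (htr : ∑ i, b (e i) (e i) = 0) (Z Y : V) :
    g Z Z * b Y Y + g Y Y * b Z Z =
      2 * ∑ a, g (quatUnits I J K a Z) Y * b (quatUnits I J K a Z) Y := by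
  let defect : BilinForm C V := b Y Y • g + g Y Y • b -
    (2 : C) • ∑ a, BilinForm.linMulLin (g.flip Y ∘ₗ quatUnits I J K a)
      (b.flip Y ∘ₗ quatUnits I J K a)
  have defect_self (Z : V) : defect Z Z = g Z Z * b Y Y + g Y Y * b Z Z -
      2 * ∑ a, g (quatUnits I J K a Z) Y * b (quatUnits I J K a Z) Y := by
    simp [defect, mul_comm (b Y Y)]
  refine sub_eq_zero.mp ((defect_self Z).symm.trans
    (he.apply_self_eq_zero_of_isUnit (fun Z hZ => ?_) Z))
  rw [defect_self, cayleyHamilton_of_isUnit h hg he hι hb htr hZ, sub_self]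

theorem cayleyHamilton_polar (h : IsQuaternionic I J K) (hg : IsHermitianForm I J K g)
    (he : IsOrthonormalFrame g e) (hι : Fintype.card ι = 8) (hb : IsHermitianForm I J K b)
    (htr : ∑ i, b (e i) (e i) = 0) (Z Y Y' : V) :
    g Z Z * b Y Y' + g Y Y' * b Z Z =
      ∑ a, (g (quatUnits I J K a Z) Y * b (quatUnits I J K a Z) Y' +
        g (quatUnits I J K a Z) Y' * b (quatUnits I J K a Z) Y) := by
  have main (Y : V) := cayleyHamilton h hg he hι hb htr Z Y
  have sum := main (Y + Y')
  simp only [map_add, LinearMap.add_apply, add_mul, mul_add, Finset.sum_add_distrib,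
    hb.symm Y' Y, hg.symm Y' Y] at sum
  refine (isUnit_of_invertible (2 : C)).mul_left_cancel ?_
  rw [Finset.sum_add_distrib]
  linear_combination sum - main Y - main Y'

theorem cayleyHamilton_polar_polar (h : IsQuaternionic I J K) (hg : IsHermitianForm I J K g)
    (he : IsOrthonormalFrame g e) (hι : Fintype.card ι = 8) (hb : IsHermitianForm I J K b)
    (htr : ∑ i, b (e i) (e i) = 0) (Z W Y Y' : V) :
    2 * (g Z W * b Y Y' + g Y Y' * b Z W) =
      ∑ a, (g (quatUnits I J K a Z) Y * b (quatUnits I J K a W) Y' +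
        g (quatUnits I J K a Z) Y' * b (quatUnits I J K a W) Y) +
      ∑ a, (g (quatUnits I J K a W) Y * b (quatUnits I J K a Z) Y' +
        g (quatUnits I J K a W) Y' * b (quatUnits I J K a Z) Y) := by
  have main (Z : V) := cayleyHamilton_polar h hg he hι hb htr Z Y Y'
  have sum := main (Z + W)
  have hZ := main Z
  have hW := main W
  simp only [map_add, LinearMap.add_apply, add_mul, mul_add, Finset.sum_add_distrib,
    hb.symm W Z, hg.symm W Z] at sum hZ hW ⊢
  linear_combination sum - hZ - hW

/-- Trilinear forms that are Hermitian in the last two slots and all of whose contractions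
vanish. -/
structure IsTraceFreeHermitian (I J K : Module.End C V) (e : ι → V)
    (k : V →ₗ[C] BilinForm C V) : Prop where
  hermitian : ∀ X, IsHermitianForm I J K (k X)
  trace : ∀ X, ∑ i, k X (e i) (e i) = 0
  contraction : ∀ Z, ∑ i, k (e i) (e i) Z = 0

theorem two_mul_eq_sub_quatTwist (h : IsQuaternionic I J K) (hg : IsHermitianForm I J K g)
    (he : IsOrthonormalFrame g e) (hι : Fintype.card ι = 8) {k : V →ₗ[C] BilinForm C V}
    (hk : IsTraceFreeHermitian I J K e k) (X Y Z : V) :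
    2 * k X Y Z =
      k Y X Z - quatTwist I J K k Y X Z + (k Z X Y - quatTwist I J K k Z X Y) := by
  have contraction_quatUnits (a : Fin 4) (Z : V) :
      ∑ i, k (e i) (quatUnits I J K a (e i)) Z = 0 := by
    simp only [(hk.hermitian _).apply_quatUnits_left, hk.contraction]
  have vanish (Y Z : V) :
      ∑ i, ∑ a, g (quatUnits I J K a X) Y * k (e i) (quatUnits I J K a (e i)) Z = 0 := by
    rw [Finset.sum_comm]
    simp only [← Finset.mul_sum, contraction_quatUnits, mul_zero, Finset.sum_const_zero]
  have transfer (Y Z : V) :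
      ∑ i, ∑ a, g (quatUnits I J K a (e i)) Y * k (e i) (quatUnits I J K a X) Z =
        k Y X Z - quatTwist I J K k Y X Z := by
    have (a : Fin 4) := he.sum_mul_apply
      ((k.flip (quatUnits I J K a X)).flip Z) (quatUnits (-I) (-J) (-K) a Y)
    simp only [LinearMap.flip_apply] at this
    rw [Finset.sum_comm]
    simp only [hg.apply_quatUnits_left, hg.symm (e _), this]
    simp only [quatUnits, Fin.sum_univ_four, Matrix.cons_val_zero, Module.End.one_apply,
      Matrix.cons_val_one, LinearMap.neg_apply, map_neg, Matrix.cons_val, quatTwist_apply]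
    ring
  have polar (i : ι) :=
    cayleyHamilton_polar_polar h hg he hι (hk.hermitian (e i)) (hk.trace (e i)) X (e i) Y Z
  have contract (Y Z : V) : ∑ i, g X (e i) * k (e i) Y Z = k X Y Z :=
    he.sum_mul_apply ((k.flip Y).flip Z) X
  have sum_polar := Finset.sum_congr (rfl : Finset.univ = Finset.univ) fun i _ => polar i
  simp only [Finset.sum_add_distrib, ← Finset.mul_sum, fun i => (hk.hermitian (e i)).symm X,
    hk.contraction, vanish, transfer, contract] at sum_polar
  linear_combination sum_polar

end CayleyHamilton

section CyclicSum

variable {k : V →ₗ[C] BilinForm C V}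

theorem cyclicSum_swap_left (hk : ∀ X Y Z, k X Z Y = -k X Y Z) (X Y Z : V) :
    cyclicSum k Y X Z = -cyclicSum k X Y Z := by
  simp only [cyclicSum_apply]
  linear_combination hk Y Z X + hk X Y Z + hk Z X Y

theorem cyclicSum_swap_right (hk : ∀ X Y Z, k X Z Y = -k X Y Z) (X Y Z : V) :
    cyclicSum k X Z Y = -cyclicSum k X Y Z := by
  simp only [cyclicSum_apply]
  linear_combination hk Y Z X + hk X Y Z + hk Z X Y

theorem quatTwist_cyc : quatTwist J K I k = quatTwist I J K k := by
  simp only [quatTwist]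
  abel

theorem quatTwist_swap_right (hk : ∀ X, IsHermitianForm I J K (k X)) (X Y Z : V) :
    quatTwist I J K k X Z Y = -quatTwist I J K k X Y Z := by
  simp only [quatTwist_apply, (hk _).symm _ Y, (hk _).skew_I, (hk _).skew_J, (hk _).skew_K]
  ring

theorem quatTwist_apply_I₁₂ (h : IsQuaternionic I J K) (X Y Z : V) :
    quatTwist I J K k (I X) (I Y) Z = k X Y Z + quatTwist I J K k X Y Z - k (I X) (I Y) Z := by
  simp only [quatTwist_apply, h.I_I, h.J_I, h.K_I, map_neg, LinearMap.neg_apply, neg_neg]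
  ring

theorem quatTwist_apply_I₁₃ (h : IsQuaternionic I J K) (hk : ∀ X, IsHermitianForm I J K (k X))
    (X Y Z : V) :
    quatTwist I J K k (I X) Y (I Z) =
      -k X Y Z + quatTwist I J K k X Y Z - k (I X) (I Y) Z := by
  simp only [quatTwist_apply, (hk _).skew_I, h.I_I, h.J_I, h.K_I, h.I_J, h.I_K, map_neg,
    LinearMap.neg_apply, neg_neg]
  ring

theorem quatTwist_apply_I₂₃ (h : IsQuaternionic I J K) (hk : ∀ X, IsHermitianForm I J K (k X))
    (X Y Z : V) :
    quatTwist I J K k X (I Y) (I Z) = 2 * k (I X) (I Y) Z - quatTwist I J K k X Y Z := by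
  simp only [quatTwist_apply, (hk _).skew_I, h.I_I, h.J_I, h.K_I, h.I_J, h.I_K, map_neg,
    LinearMap.neg_apply, neg_neg]
  ring

theorem calL_cyclicSum_quatTwist (h : IsQuaternionic I J K)
    (hk : ∀ X, IsHermitianForm I J K (k X)) :
    calL I (fun X Y Z => cyclicSum (quatTwist I J K k) X Y Z) =
      fun X Y Z => cyclicSum (quatTwist I J K k) X Y Z := by
  funext X Y Z
  simp only [calL, op12, op13, op23, cyclicSum_apply, quatTwist_apply_I₁₂ h,
    quatTwist_apply_I₁₃ h hk, quatTwist_apply_I₂₃ h hk]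
  ring

theorem sum_cyclicSum_quatTwist_quatUnits (h : IsQuaternionic I J K)
    (hk : ∀ X, IsHermitianForm I J K (k X)) (X Y Z : V) :
    cyclicSum (quatTwist I J K k) X (I Y) (I Z) + cyclicSum (quatTwist I J K k) X (J Y) (J Z) +
        cyclicSum (quatTwist I J K k) X (K Y) (K Z) =
      3 * k Y Z X + 2 * quatTwist I J K k Y Z X - quatTwist I J K k X Y Z -
        3 * k Z X Y + 2 * quatTwist I J K k Z X Y := by
  have along_I {I J K : Module.End C V} (h : IsQuaternionic I J K)
      (hk : ∀ X, IsHermitianForm I J K (k X)) :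
      cyclicSum (quatTwist I J K k) X (I Y) (I Z) =
        2 * k (I X) (I Y) Z - quatTwist I J K k X Y Z +
        (k Y Z X + quatTwist I J K k Y Z X - k (I Y) (I Z) X) +
        (-k Z X Y + quatTwist I J K k Z X Y - k (I Z) (I X) Y) := by
    rw [cyclicSum_apply, quatTwist_apply_I₁₂ h, quatTwist_apply_I₁₃ h hk,
      quatTwist_apply_I₂₃ h hk]
  have hI := along_I h hk
  have hJ := along_I h.cyc fun X => (hk X).cyc
  have hK := along_I h.cyc.cyc fun X => (hk X).cyc.cyc
  simp only [quatTwist_cyc] at hJ hK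
  rw [hI, hJ, hK]
  simp only [quatTwist_apply]
  ring

end CyclicSum

section TraceFree

variable {ι : Type*} [Fintype ι] {g : BilinForm C V} {e : ι → V} {k : V →ₗ[C] BilinForm C V}

theorem IsHermitianForm.apply_skew (hg : IsHermitianForm I J K g) (X Y : V) :
    g (I X) Y = -g (I Y) X := by
  rw [← hg.skew_I, hg.symm]

theorem IsTraceFreeHermitian.cyc (hk : IsTraceFreeHermitian I J K e k) :
    IsTraceFreeHermitian J K I e k :=
  ⟨fun X => (hk.hermitian X).cyc, hk.trace, hk.contraction⟩

theorem IsTraceFreeHermitian.contraction_I (hk : IsTraceFreeHermitian I J K e k) (X : V) :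
    ∑ i, k (e i) (I (e i)) X = 0 := by
  simp only [← neg_eq_iff_eq_neg.mpr ((hk.hermitian _).skew_I _ _), Finset.sum_neg_distrib,
    hk.contraction, neg_zero]

variable [DecidableEq ι]

theorem three_mul_cyclicSum_sub [Invertible (2 : C)] (h : IsQuaternionic I J K)
    (hg : IsHermitianForm I J K g) (he : IsOrthonormalFrame g e) (hι : Fintype.card ι = 8)
    (hk : IsTraceFreeHermitian I J K e k) (X Y Z : V) :
    3 * cyclicSum (quatTwist I J K k) X Y Z -
        (cyclicSum (quatTwist I J K k) X (I Y) (I Z) +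
          cyclicSum (quatTwist I J K k) X (J Y) (J Z) +
          cyclicSum (quatTwist I J K k) X (K Y) (K Z)) =
      6 * quatTwist I J K k X Y Z := by
  have atY := two_mul_eq_sub_quatTwist h hg he hι hk Y X Z
  have atZ := two_mul_eq_sub_quatTwist h hg he hι hk Z X Y
  have skew := quatTwist_swap_right hk.hermitian
  simp only [(hk.hermitian X).symm Z Y, (hk.hermitian Y).symm Z X, (hk.hermitian Z).symm Y X,
    skew X Y Z, skew Z X Y] at atY atZ
  rw [sum_cyclicSum_quatTwist_quatUnits h hk.hermitian, cyclicSum_apply]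
  rw [(hk.hermitian Y).symm Z X]
  linear_combination atZ - atY

theorem IsOrthonormalFrame.sum_apply_skew (he : IsOrthonormalFrame g e) {A : Module.End C V}
    (hA : ∀ X Y, g (A X) Y = -g (A Y) X) (B : Module.End C V) (X : V) :
    ∑ i, k (A (e i)) (B (e i)) X = -∑ i, k (e i) (B (A (e i))) X :=
  he.trace_skew ((k.compr₂ (LinearMap.applyₗ X)).compl₂ B) hA

theorem IsTraceFreeHermitian.sum_cyclicSum [Invertible (2 : C)] (h : IsQuaternionic I J K)
    (hg : IsHermitianForm I J K g) (he : IsOrthonormalFrame g e)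
    (hk : IsTraceFreeHermitian I J K e k) (X : V) :
    ∑ i, cyclicSum (quatTwist I J K k) X (I (e i)) (e i) = 0 := by
  have summand (i : ι) : cyclicSum (quatTwist I J K k) X (I (e i)) (e i) =
      -k (I X) (e i) (e i) - k (e i) (I (e i)) X + k (I (e i)) (e i) X +
        2 * (k (J (e i)) (K (e i)) X - k (K (e i)) (J (e i)) X) := by
    have hJ := (hk.hermitian (K X)).cyc.apply_I_self (e i)
    have hK := (hk.hermitian (J X)).cyc.cyc.apply_I_self (e i)
    rw [cyclicSum_apply, quatTwist_swap_right hk.hermitian (e i)]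
    simp only [quatTwist_apply, h.I_I, h.J_I, h.K_I, map_neg, LinearMap.neg_apply, hJ, hK]
    ring
  have sum_I : ∑ i, k (I (e i)) (e i) X = 0 := by
    simpa [hk.contraction_I] using he.sum_apply_skew (k := k) hg.apply_skew 1 X
  have sum_J : ∑ i, k (J (e i)) (K (e i)) X = 0 := by
    simp [he.sum_apply_skew hg.cyc.apply_skew, h.K_J, hk.contraction_I]
  have sum_K : ∑ i, k (K (e i)) (J (e i)) X = 0 := by
    simp [he.sum_apply_skew hg.cyc.cyc.apply_skew, h.J_K, hk.contraction_I]
  simp only [summand, Finset.sum_add_distrib, Finset.sum_sub_distrib, Finset.sum_neg_distrib,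
    ← Finset.mul_sum, hk.trace, hk.contraction_I, sum_I, sum_J, sum_K]
  ring

end TraceFree

section EHTensor

/-- The `EH`-type trilinear form determined by a one-form `θ`: Hermitian and trace free in its
last two arguments, with contraction a nonzero multiple of `θ`. -/
def ehTensor (g : BilinForm C V) (I J K : Module.End C V) (θ : V →ₗ[C] C) :
    V →ₗ[C] BilinForm C V where
  toFun X := ∑ a, (BilinForm.linMulLin (g X ∘ₗ quatUnits I J K a) (θ ∘ₗ quatUnits I J K a) +
    BilinForm.linMulLin (θ ∘ₗ quatUnits I J K a) (g X ∘ₗ quatUnits I J K a)) - θ X • g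
  map_add' X X' := by
    ext Y Z
    simp only [map_add, Fin.sum_univ_four, LinearMap.sub_apply, LinearMap.add_apply,
      LinearMap.smul_apply, BilinForm.linMulLin_apply, LinearMap.coe_comp, Function.comp_apply,
      smul_eq_mul]
    ring
  map_smul' c X := by
    ext Y Z
    simp only [map_smul, Fin.sum_univ_four, smul_eq_mul, LinearMap.sub_apply, LinearMap.add_apply,
      LinearMap.smul_apply, BilinForm.linMulLin_apply, LinearMap.coe_comp, LinearMap.coe_smul,
      Function.comp_apply, Pi.smul_apply, RingHom.id_apply]
    ring

variable {ι : Type*} [Fintype ι] [DecidableEq ι] {g : BilinForm C V} {e : ι → V}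

theorem ehTensor_apply (θ : V →ₗ[C] C) (X Y Z : V) : ehTensor g I J K θ X Y Z =
    ∑ a, (g X (quatUnits I J K a Y) * θ (quatUnits I J K a Z) +
      g X (quatUnits I J K a Z) * θ (quatUnits I J K a Y)) - θ X * g Y Z := by
  simp [ehTensor, mul_comm (θ (quatUnits I J K _ _))]

theorem ehTensor_hermitian (h : IsQuaternionic I J K) (hg : IsHermitianForm I J K g)
    (θ : V →ₗ[C] C) (X : V) : IsHermitianForm I J K (ehTensor g I J K θ X) where
  symm Y Z := by
    simp only [ehTensor_apply, hg.symm Y Z, add_comm]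
  skew_I Y Z := by
    simp only [ehTensor_apply, quatUnits, Fin.sum_univ_four, Matrix.cons_val_zero,
      Module.End.one_apply, hg.skew_I, neg_mul, Matrix.cons_val_one, h.I_I, map_neg, mul_neg,
      neg_neg, Matrix.cons_val, h.J_I, h.K_I, sub_neg_eq_add, neg_sub]
    ring
  skew_J Y Z := by
    simp only [ehTensor_apply, quatUnits, Fin.sum_univ_four, Matrix.cons_val_zero,
      Module.End.one_apply, hg.skew_J, neg_mul, Matrix.cons_val_one, h.I_J, Matrix.cons_val, h.J_J,
      map_neg, mul_neg, neg_neg, h.K_J, sub_neg_eq_add, neg_sub]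
    ring
  skew_K Y Z := by
    simp only [ehTensor_apply, quatUnits, Fin.sum_univ_four, Matrix.cons_val_zero,
      Module.End.one_apply, hg.skew_K, neg_mul, Matrix.cons_val_one, h.I_K, map_neg, mul_neg,
      Matrix.cons_val, h.J_K, h.K_K, neg_neg, sub_neg_eq_add, neg_sub]
    ring

theorem sum_apply_quatUnits_mul (h : IsQuaternionic I J K) (hg : IsHermitianForm I J K g)
    (he : IsOrthonormalFrame g e) (θ : V →ₗ[C] C) (X : V) (a : Fin 4) :
    ∑ i, g X (quatUnits I J K a (e i)) * θ (quatUnits I J K a (e i)) = θ X := by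
  have hI := he.sum_mul_apply (θ ∘ₗ I) (I X)
  have hJ := he.sum_mul_apply (θ ∘ₗ J) (J X)
  have hK := he.sum_mul_apply (θ ∘ₗ K) (K X)
  simp only [LinearMap.comp_apply, h.I_I, h.J_J, h.K_K, map_neg] at hI hJ hK
  fin_cases a <;>
    simp [quatUnits, hg.skew_I, hg.skew_J, hg.skew_K, hI, hJ, hK, he.sum_mul_apply]

theorem ehTensor_trace (h : IsQuaternionic I J K) (hg : IsHermitianForm I J K g)
    (he : IsOrthonormalFrame g e) (hι : Fintype.card ι = 8) (θ : V →ₗ[C] C) (X : V) :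
    ∑ i, ehTensor g I J K θ X (e i) (e i) = 0 := by
  simp only [ehTensor_apply, Finset.sum_sub_distrib, ← Finset.mul_sum, he.trace_metric, hι]
  rw [Finset.sum_comm]
  simp only [Finset.sum_add_distrib, sum_apply_quatUnits_mul h hg he, Finset.sum_const,
    Finset.card_univ, Fintype.card_fin]
  ring

theorem ehTensor_contraction [Invertible (2 : C)] (h : IsQuaternionic I J K)
    (hg : IsHermitianForm I J K g) (he : IsOrthonormalFrame g e) (hι : Fintype.card ι = 8)
    (θ : V →ₗ[C] C) (Z : V) : ∑ i, ehTensor g I J K θ (e i) (e i) Z = 5 * θ Z := by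
  have apply_frame (φ : V →ₗ[C] C) (W : V) : ∑ i, g (e i) W * φ (e i) = φ W := by
    simp only [hg.symm (e _), he.sum_mul_apply]
  have hI := apply_frame (θ ∘ₗ I) (I Z)
  have hJ := apply_frame (θ ∘ₗ J) (J Z)
  have hK := apply_frame (θ ∘ₗ K) (K Z)
  have h_one := apply_frame θ Z
  have metric_self (i : ι) : g (e i) (I (e i)) = 0 ∧ g (e i) (J (e i)) = 0 ∧
      g (e i) (K (e i)) = 0 := by
    simp [hg.skew_I, hg.skew_J, hg.skew_K, hg.apply_I_self, hg.cyc.apply_I_self,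
      hg.cyc.cyc.apply_I_self]
  simp only [LinearMap.comp_apply, h.I_I, h.J_J, h.K_K, map_neg] at hI hJ hK
  simp only [ehTensor_apply, quatUnits, Finset.sum_add_distrib, Fin.sum_univ_four,
    Matrix.cons_val_zero, Module.End.one_apply, he.norm_eq_one, one_mul, Matrix.cons_val_one,
    metric_self, zero_mul, add_zero, Matrix.cons_val, mul_comm (θ (e _)), Finset.sum_sub_distrib,
    Finset.sum_const, Finset.card_univ, hι, nsmul_eq_mul, Nat.cast_ofNat, h_one, hI,
    add_neg_cancel, hJ, zero_add, hK]
  ring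

theorem quatTwist_ehTensor (h : IsQuaternionic I J K) (hg : IsHermitianForm I J K g)
    (θ : V →ₗ[C] C) (X Y Z : V) :
    quatTwist I J K (ehTensor g I J K θ) X Y Z =
      3 * (g X Y * θ Z - g X Z * θ Y) +
      (g (I X) Y * θ (I Z) - g (I X) Z * θ (I Y)) +
      (g (J X) Y * θ (J Z) - g (J X) Z * θ (J Y)) +
      (g (K X) Y * θ (K Z) - g (K X) Z * θ (K Y)) +
      (θ (I X) * g Y (I Z) + θ (J X) * g Y (J Z) + θ (K X) * g Y (K Z)) := by
  simp only [quatTwist_apply, ehTensor_apply, quatUnits, Fin.sum_univ_four, Matrix.cons_val_zero,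
    Module.End.one_apply, hg.skew_I, h.I_I, map_neg, LinearMap.neg_apply, neg_neg,
    Matrix.cons_val_one, neg_mul, mul_neg, Matrix.cons_val, h.J_I, hg.skew_K, h.K_I, hg.skew_J,
    h.J_J, h.I_J, h.K_J, h.K_K, h.I_K, h.J_K]
  ring

end EHTensor

theorem IsHermitianForm.smul {b : BilinForm C V} (hb : IsHermitianForm I J K b) (c : C) :
    IsHermitianForm I J K (c • b) :=
  ⟨by simp [hb.symm], by simp [hb.skew_I], by simp [hb.skew_J], by simp [hb.skew_K]⟩

theorem IsHermitianForm.sub {b b' : BilinForm C V} (hb : IsHermitianForm I J K b)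
    (hb' : IsHermitianForm I J K b') : IsHermitianForm I J K (b - b') where
  symm Y Z := by simp [hb.symm Y, hb'.symm Y]
  skew_I Y Z := by simp only [LinearMap.sub_apply, hb.skew_I, hb'.skew_I]; ring
  skew_J Y Z := by simp only [LinearMap.sub_apply, hb.skew_J, hb'.skew_J]; ring
  skew_K Y Z := by simp only [LinearMap.sub_apply, hb.skew_K, hb'.skew_K]; ring

section ImaginaryPart

/-- The `I`-component of the part of `b` in the imaginary quaternions, as a Hermitian form up to
symmetrization. -/
def imPart (I J K : Module.End C V) : BilinForm C V →ₗ[C] BilinForm C V where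
  toFun b := b.compl₁₂ 1 I - b.compl₁₂ I 1 + b.compl₁₂ J K - b.compl₁₂ K J
  map_add' b b' := by
    ext Y Z
    simp only [LinearMap.sub_apply, LinearMap.add_apply, LinearMap.compl₁₂_apply,
      Module.End.one_apply]
    ring
  map_smul' c b := by
    ext Y Z
    simp only [LinearMap.sub_apply, LinearMap.add_apply, LinearMap.compl₁₂_apply,
      Module.End.one_apply, LinearMap.smul_apply, smul_eq_mul, RingHom.id_apply]
    ring

theorem imPart_apply (b : BilinForm C V) (Y Z : V) :
    imPart I J K b Y Z = b Y (I Z) - b (I Y) Z + b (J Y) (K Z) - b (K Y) (J Z) := rfl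

theorem imPart_hermitian {b : BilinForm C V} (h : IsQuaternionic I J K)
    (hb : IsHermitianForm I J K (b + b.flip)) : IsHermitianForm I J K (imPart I J K b) where
  symm Y Z := by
    have hI := hb.skew_I Y Z
    have hJ := hb.skew_J Y (K Z)
    have hK := hb.skew_K Y (J Z)
    simp only [LinearMap.add_apply, BilinForm.flip_apply, h.J_K, h.K_J, map_neg] at hI hJ hK
    simp only [imPart_apply]
    linear_combination hJ - hI - hK
  skew_I Y Z := by
    simp only [imPart_apply, h.I_I, h.J_I, h.K_I, map_neg, LinearMap.neg_apply]
    ring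
  skew_J Y Z := by
    simp only [imPart_apply, h.I_J, h.J_J, h.K_J, map_neg, LinearMap.neg_apply]
    ring
  skew_K Y Z := by
    simp only [imPart_apply, h.I_K, h.J_K, h.K_K, map_neg, LinearMap.neg_apply]
    ring

theorem three_mul_sub_quatUnits (h : IsQuaternionic I J K) (b : BilinForm C V) (Y Z : V) :
    3 * b Y Z - (b (I Y) (I Z) + b (J Y) (J Z) + b (K Y) (K Z)) =
      -(imPart I J K b Y (I Z) + imPart J K I b Y (J Z) + imPart K I J b Y (K Z)) := by
  simp only [imPart_apply, h.I_I, h.J_J, h.K_K, h.I_J, h.J_I, h.J_K, h.K_J, h.K_I, h.I_K,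
    map_neg]
  ring

theorem sum_imPart {ι : Type*} [Fintype ι] [DecidableEq ι] {g : BilinForm C V} {e : ι → V}
    (h : IsQuaternionic I J K) (hg : IsHermitianForm I J K g) (he : IsOrthonormalFrame g e)
    (b : BilinForm C V) :
    ∑ i, imPart I J K b (e i) (e i) = 4 * ∑ i, b (e i) (I (e i)) := by
  have move_I := he.trace_skew b fun X Y => by rw [← hg.skew_I, hg.symm]
  have move_J := he.trace_skew (b.compl₂ K) fun X Y => by rw [← hg.skew_J, hg.symm]
  have move_K := he.trace_skew (b.compl₂ J) fun X Y => by rw [← hg.skew_K, hg.symm]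
  simp only [LinearMap.compl₂_apply, h.J_K, h.K_J, map_neg, Finset.sum_neg_distrib]
    at move_J move_K
  simp only [imPart_apply, Finset.sum_add_distrib, Finset.sum_sub_distrib, move_I, move_J, move_K]
  ring

end ImaginaryPart

-- Subtraction on `V →ₗ[C] BilinForm C V` is not found at the default depth.
set_option maxSynthPendingDepth 3

section SymmetricTorsion

variable {ι : Type*} [Fintype ι] {e : ι → V} {s : V →ₗ[C] BilinForm C V}

/-- The trace of a trilinear form over its last two slots. -/
def sliceTrace (e : ι → V) (k : V →ₗ[C] BilinForm C V) : V →ₗ[C] C :=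
  ∑ i, (k.flip (e i)).flip (e i)

theorem sliceTrace_apply (k : V →ₗ[C] BilinForm C V) (X : V) :
    sliceTrace e k X = ∑ i, k X (e i) (e i) := by
  simp [sliceTrace]

/-- The Hermitian-valued trilinear form `κ` with `κ (A X)` the imaginary part of `s X` along `A`,
for each `A = I, J, K` as soon as `s` is symmetric in its first two slots. -/
def imForm (I J K : Module.End C V) (s : V →ₗ[C] BilinForm C V) : V →ₗ[C] BilinForm C V :=
  -(imPart I J K ∘ₗ s ∘ₗ I)

theorem imForm_hermitian (h : IsQuaternionic I J K)
    (hs : ∀ X, IsHermitianForm I J K (s X + (s X).flip)) (X : V) :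
    IsHermitianForm I J K (imForm I J K s X) := by
  simpa [imForm] using imPart_hermitian h (hs (-I X))

theorem imForm_apply_I (h : IsQuaternionic I J K) (X : V) :
    imForm I J K s (I X) = imPart I J K (s X) := by
  simp [imForm, h.I_I]

variable [Invertible (2 : C)]

theorem eq_zero_of_hermitian_of_symm (h : IsQuaternionic I J K) {P : V →ₗ[C] BilinForm C V}
    (hP : ∀ X, IsHermitianForm I J K (P X))
    (symm : ∀ X Y Z, P X Y Z + P (I X) Y (I Z) = P Y X Z + P (I Y) X (I Z)) : P = 0 := by
  have vanish (X Y Z : V) : P X Y (J Z) + P (I X) Y (I (J Z)) = 0 := by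
    refine eq_zero_of_symm_of_skew (R := fun X Y Z => P X Y (J Z) + P (I X) Y (I (J Z)))
      (fun X Y Z => symm X Y (J Z)) (fun X Y Z => ?_) X Y Z
    simp only [h.I_J, (hP _).skew_J Z, (hP _).skew_K Z, (hP _).symm _ Y]
    ring
  have eq_neg (X Y Z : V) : P X Y Z = -P (I X) Y (I Z) := by
    have := vanish X Y (J Z)
    simp only [h.J_J, map_neg] at this
    linear_combination -this
  ext X Y Z
  exact eq_zero_of_eq_neg <| by
    linear_combination eq_neg X Y Z + eq_neg X Z Y - (hP (I X)).skew_I Y Z -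
      (hP (I X)).symm Z (I Y) - (hP X).symm Z Y

theorem imPart_J_eq (h : IsQuaternionic I J K) (symm : ∀ X Y Z, s X Y Z = s Y X Z)
    (hs : ∀ X, IsHermitianForm I J K (s X + (s X).flip)) :
    imPart J K I ∘ₗ s = imPart K I J ∘ₗ s ∘ₗ I := by
  refine sub_eq_zero.mp (eq_zero_of_hermitian_of_symm h (fun X => ?_) fun X Y Z => ?_)
  · exact (imPart_hermitian h.cyc (hs X).cyc).cyc.cyc.sub
      (imPart_hermitian h.cyc.cyc (hs (I X)).cyc.cyc).cyc
  · simp only [LinearMap.sub_apply, LinearMap.comp_apply, imPart_apply, h.I_I, h.J_I, h.K_I,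
      map_neg, LinearMap.neg_apply]
    linear_combination 2 * symm X Y (J Z) - 2 * symm X (I Y) (K Z) - 2 * symm (I X) Y (K Z) -
      2 * symm (I X) (I Y) (J Z)

theorem imForm_apply_J (h : IsQuaternionic I J K) (symm : ∀ X Y Z, s X Y Z = s Y X Z)
    (hs : ∀ X, IsHermitianForm I J K (s X + (s X).flip)) (X : V) :
    imForm I J K s (J X) = imPart J K I (s X) := by
  have hJ := LinearMap.congr_fun (imPart_J_eq h symm hs) X
  have hK := LinearMap.congr_fun (imPart_J_eq h.cyc symm fun X => (hs X).cyc) (I X)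
  simp only [LinearMap.comp_apply] at hJ hK
  rw [hJ, hK]
  simp [imForm, h.I_J, h.J_I]

theorem imForm_apply_K (h : IsQuaternionic I J K) (symm : ∀ X Y Z, s X Y Z = s Y X Z)
    (hs : ∀ X, IsHermitianForm I J K (s X + (s X).flip)) (X : V) :
    imForm I J K s (K X) = imPart K I J (s X) := by
  have hK := LinearMap.congr_fun (imPart_J_eq h.cyc symm fun X => (hs X).cyc) X
  simp only [LinearMap.comp_apply] at hK
  rw [hK]
  simp [imForm, h.I_K]

theorem quatTwist_imForm (h : IsQuaternionic I J K) (symm : ∀ X Y Z, s X Y Z = s Y X Z)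
    (hs : ∀ X, IsHermitianForm I J K (s X + (s X).flip)) (X Y Z : V) :
    quatTwist I J K (imForm I J K s) X Y Z =
      s X (I Z) (I Y) + s X (J Z) (J Y) + s X (K Z) (K Y) - 3 * s X Z Y := by
  have hI := imForm_hermitian h hs (I X)
  have hJ := imForm_hermitian h hs (J X)
  have hK := imForm_hermitian h hs (K X)
  rw [quatTwist_apply, hI.symm (I Y), hJ.symm (J Y), hK.symm (K Y), imForm_apply_I h,
    imForm_apply_J h symm hs, imForm_apply_K h symm hs]
  linear_combination three_mul_sub_quatUnits h (s X) Z Y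

variable [DecidableEq ι] {g : BilinForm C V}

theorem exists_quatTwist_eq (h : IsQuaternionic I J K) (hg : IsHermitianForm I J K g)
    (he : IsOrthonormalFrame g e) (hι : Fintype.card ι = 8)
    (symm : ∀ X Y Z, s X Y Z = s Y X Z)
    (hs : ∀ X, IsHermitianForm I J K (s X + (s X).flip)) :
    ∃ k : V →ₗ[C] BilinForm C V, (∀ X, IsHermitianForm I J K (k X)) ∧
      (∀ X, ∑ i, k X (e i) (e i) = 0) ∧ ∀ X Y Z, quatTwist I J K k X Y Z =
        8 * (3 * s X Z Y - (s X (I Z) (I Y) + s X (J Z) (J Y) + s X (K Z) (K Y))) -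
        4 * ((∑ i, s X (e i) (I (e i))) * g Y (I Z) + (∑ i, s X (e i) (J (e i))) * g Y (J Z) +
          (∑ i, s X (e i) (K (e i))) * g Y (K Z)) := by
  have hermitian := imForm_hermitian h hs
  refine ⟨(sliceTrace e (imForm I J K s)).smulRight g - (8 : C) • imForm I J K s,
    fun X => (hg.smul _).sub ((hermitian X).smul _), fun X => ?_, fun X Y Z => ?_⟩
  · simp only [LinearMap.sub_apply, LinearMap.coe_smulRight, sliceTrace_apply,
      LinearMap.smul_apply, smul_eq_mul, Finset.sum_sub_distrib, ← Finset.mul_sum, he.trace_metric,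
      hι, Nat.cast_ofNat]
    ring
  · have twist := quatTwist_imForm h symm hs X Y Z
    have trace_I := sum_imPart h hg he (s X)
    have trace_J := sum_imPart h.cyc hg.cyc he (s X)
    have trace_K := sum_imPart h.cyc.cyc hg.cyc.cyc he (s X)
    simp only [quatTwist_apply] at twist
    simp only [quatTwist_apply, LinearMap.sub_apply, LinearMap.smulRight_apply,
      LinearMap.smul_apply, smul_eq_mul, sliceTrace_apply, imForm_apply_I h,
      imForm_apply_J h symm hs, imForm_apply_K h symm hs, trace_I, trace_J, trace_K,
      hg.skew_I, hg.skew_J, hg.skew_K] at twist ⊢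
    linear_combination -8 * twist

end SymmetricTorsion

section Decomposition

variable {ι : Type*} [Fintype ι] {e : ι → V}

theorem IsTraceFreeHermitian.smul {k : V →ₗ[C] BilinForm C V}
    (hk : IsTraceFreeHermitian I J K e k) (c : C) : IsTraceFreeHermitian I J K e (c • k) where
  hermitian X := (hk.hermitian X).smul c
  trace X := by simp [← Finset.mul_sum, hk.trace]
  contraction Z := by simp [← Finset.mul_sum, hk.contraction]

variable [DecidableEq ι] {g : BilinForm C V} [Invertible (2 : C)] [Invertible (5 : C)]

theorem exists_isTraceFreeHermitian_add_ehTensor (h : IsQuaternionic I J K)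
    (hg : IsHermitianForm I J K g) (he : IsOrthonormalFrame g e) (hι : Fintype.card ι = 8)
    {k : V →ₗ[C] BilinForm C V} (hk : ∀ X, IsHermitianForm I J K (k X))
    (htr : ∀ X, ∑ i, k X (e i) (e i) = 0) :
    ∃ (k₀ : V →ₗ[C] BilinForm C V) (θ : V →ₗ[C] C),
      IsTraceFreeHermitian I J K e k₀ ∧ k = k₀ + ehTensor g I J K θ := by
  let θ : V →ₗ[C] C := (⅟5 : C) • ∑ i, k (e i) (e i)
  refine ⟨k - ehTensor g I J K θ, θ, ⟨fun X => ?_, fun X => ?_, fun Z => ?_⟩,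
    (sub_add_cancel _ _).symm⟩
  · exact (hk X).sub (ehTensor_hermitian h hg θ X)
  · simp only [LinearMap.sub_apply, Finset.sum_sub_distrib, htr, ehTensor_trace h hg he hι,
      sub_zero]
  · simp [Finset.sum_sub_distrib, ehTensor_contraction h hg he hι, θ]

theorem exists_cyclicSum_add_ehTensor [Invertible (3 : C)] (h : IsQuaternionic I J K)
    (hg : IsHermitianForm I J K g) (he : IsOrthonormalFrame g e) (hι : Fintype.card ι = 8)
    {k : V →ₗ[C] BilinForm C V} (hk : ∀ X, IsHermitianForm I J K (k X))
    (htr : ∀ X, ∑ i, k X (e i) (e i) = 0) :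
    ∃ (k₀ : V →ₗ[C] BilinForm C V) (θ : V →ₗ[C] C), IsTraceFreeHermitian I J K e k₀ ∧
      ∀ X Y Z, quatTwist I J K k X Y Z =
        3 * cyclicSum (quatTwist I J K k₀) X Y Z -
          (cyclicSum (quatTwist I J K k₀) X (I Y) (I Z) +
            cyclicSum (quatTwist I J K k₀) X (J Y) (J Z) +
            cyclicSum (quatTwist I J K k₀) X (K Y) (K Z)) +
        quatTwist I J K (ehTensor g I J K θ) X Y Z := by
  obtain ⟨k₀, θ, hk₀, rfl⟩ := exists_isTraceFreeHermitian_add_ehTensor h hg he hι hk htr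
  refine ⟨(⅟2 * ⅟3 : C) • k₀, θ, hk₀.smul _, fun X Y Z => ?_⟩
  rw [three_mul_cyclicSum_sub h hg he hι (hk₀.smul _)]
  have inv_two := invOf_mul_self (2 : C)
  have inv_three := invOf_mul_self (3 : C)
  simp only [quatTwist_apply, LinearMap.add_apply, LinearMap.smul_apply, smul_eq_mul]
  linear_combination -(k₀ (I X) (I Y) Z + k₀ (J X) (J Y) Z + k₀ (K X) (K Y) Z) *
    (inv_two * ⅟3 * 3 + inv_three)

end Decomposition

end Quaternionic

section Geometry

theorem apply_eq_neg_of_isometry {C V : Type*} [CommRing C] [AddCommGroup V] [Module C V]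
    {b : BilinForm C V} {A : Module.End C V} (sq : ∀ X, A (A X) = -X)
    (isometry : ∀ X Y, b (A X) (A Y) = b X Y) (Y Z : V) : b Y (A Z) = -b (A Y) Z := by
  rw [← isometry (A Y), sq, map_neg, LinearMap.neg_apply, neg_neg]

/-- Natural numerals are invertible in a real algebra. -/
abbrev invertibleOfNat (C : Type*) [CommRing C] [Algebra ℝ C] (m : ℕ) [m.AtLeastTwo] :
    Invertible (ofNat(m) : C) :=
  haveI : Invertible (ofNat(m) : ℝ) := invertibleOfNonzero (OfNat.ofNat_ne_zero m)
  (Invertible.map (algebraMap ℝ C) (ofNat(m) : ℝ)).copy _ (map_ofNat _ m).symm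

theorem ofNat_mul_eq_smul {C : Type*} [CommRing C] [Algebra ℝ C] (m : ℕ) [m.AtLeastTwo] (x : C) :
    ofNat(m) * x = (ofNat(m) : ℝ) • x := by
  rw [Algebra.smul_def, map_ofNat]

/-- A map that is linear in the one-equation form used by `AQH`, as a linear map. -/
def toLinear {C V W : Type*} [CommRing C] [AddCommGroup V] [Module C V] [AddCommGroup W]
    [Module C W] (f : V → W) (hf : ∀ (c : C) X Y, f (c • X + Y) = c • f X + f Y) : V →ₗ[C] W where
  toFun := f
  map_add' X Y := by simpa using hf 1 X Y
  map_smul' c X := by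
    have map_zero : f 0 = 0 := by simpa using hf 1 0 0
    simpa [map_zero] using hf c X 0

variable {n : ℕ} {C V : Type*} [CommRing C] [Algebra ℝ C] [AddCommGroup V] [Module C V]
variable (M : AQH n C V)

/-- The metric of `M` as a bilinear form. -/
def metric : BilinForm C V :=
  LinearMap.mk₂ C M.g M.g_add M.g_smul
    (fun X Y Z => by rw [M.g_symm, M.g_add, M.g_symm Y, M.g_symm Z])
    (fun c X Y => by rw [M.g_symm, M.g_smul, M.g_symm Y, smul_eq_mul])

/-- The structure `I` of `M` as an endomorphism. -/
def endI : Module.End C V := toLinear M.I M.I_lin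

/-- The structure `J` of `M` as an endomorphism. -/
def endJ : Module.End C V := toLinear M.J M.J_lin

/-- The structure `K` of `M` as an endomorphism. -/
def endK : Module.End C V := toLinear M.K M.K_lin

theorem isQuaternionic : IsQuaternionic M.endI M.endJ M.endK :=
  ⟨M.I_sq, M.J_sq, fun X => (M.K_def X).symm, fun X => by
    change M.J (M.I X) = -M.K X
    rw [M.K_def, M.anticomm, neg_neg]⟩

theorem K_metric (X Y : V) : M.g (M.K X) (M.K Y) = M.g X Y := by
  rw [M.K_def, M.K_def, M.I_metric, M.J_metric]

theorem isHermitianForm_metric : IsHermitianForm M.endI M.endJ M.endK M.metric where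
  symm := M.g_symm
  skew_I := apply_eq_neg_of_isometry M.I_sq M.I_metric
  skew_J := apply_eq_neg_of_isometry M.J_sq M.J_metric
  skew_K := apply_eq_neg_of_isometry M.isQuaternionic.K_K M.K_metric

theorem isOrthonormalFrame : IsOrthonormalFrame M.metric M.frame :=
  ⟨M.frame_orthonormal, fun X => (M.frame_span X).symm⟩

/-- `M` with its adapted basis permuted cyclically. -/
def cyc : AQH n C V :=
  { M with
    I := M.J
    J := M.K
    K := M.I
    I_lin := M.J_lin
    J_lin := M.K_lin
    K_lin := M.I_lin
    I_sq := M.J_sq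
    J_sq := M.isQuaternionic.K_K
    K_def := fun X => (M.isQuaternionic.J_K X).symm
    anticomm := fun X => (M.isQuaternionic.J_K X).trans
      (neg_eq_iff_eq_neg.mp (M.isQuaternionic.K_J X).symm)
    I_metric := M.J_metric
    J_metric := M.K_metric }

theorem D_neg (X : V) (f : C) : M.D X (-f) = -M.D X f :=
  map_neg (AddMonoidHom.mk' (M.D X) (M.D_add X)) f

theorem nab2_omega (A : V → V) (X Y Z : V) :
    M.nab2 (M.omega A) X Y Z = M.metric Y (M.nabA A X Z) := by
  simp only [nab2, omega, nabA, M.nab_metric, map_sub]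
  change M.g (M.nab X Y) (A Z) + M.g Y (M.nab X (A Z)) - _ - _ = M.g Y _ - M.g Y _
  ring

theorem inner2_omega (A L : V → V) : M.inner2 (fun Y Z => M.metric Y (L Z)) (M.omega A) =
    (1 / 2 : ℝ) • ∑ j, M.metric (A (M.frame j)) (L (M.frame j)) := by
  rw [inner2, Finset.sum_comm]
  refine congrArg _ (Finset.sum_congr rfl fun j _ => ?_)
  have := M.isOrthonormalFrame.sum_mul_apply (M.metric.flip (L (M.frame j))) (A (M.frame j))
  simp only [BilinForm.flip_apply] at this
  rw [← this]
  exact Finset.sum_congr rfl fun i _ => (mul_comm _ _).trans (congrArg (· * _) (M.g_symm _ _))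

theorem metric_nabA_I_skew (X Y Z : V) :
    M.metric Y (M.nabA M.I X Z) = -M.metric Z (M.nabA M.I X Y) := by
  have omega_skew (Y Z : V) : M.omega M.I Y Z = -M.omega M.I Z Y :=
    (M.isHermitianForm_metric.skew_I Y Z).trans (congrArg Neg.neg (M.g_symm _ _))
  rw [← nab2_omega, ← nab2_omega, nab2, nab2, omega_skew Y Z, D_neg, omega_skew _ Z,
    omega_skew Y]
  ring

/-- `nabq` is a torsion-free connection that is quaternionic with one-forms `γI, γJ, γK`. -/
structure IsQuaternionicConnection (nabq : V → V → V) (γI γJ γK : V → C) : Prop where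
  linear_left : ∀ (f : C) X X' Y, nabq (f • X + X') Y = f • nabq X Y + nabq X' Y
  add_right : ∀ X Y Y', nabq X (Y + Y') = nabq X Y + nabq X Y'
  leibniz : ∀ X (f : C) Y, nabq X (f • Y) = f • nabq X Y + M.D X f • Y
  torsion_free : ∀ X Y, nabq X Y - nabq Y X = M.bracket X Y
  quatConn : M.QuatConn nabq γI γJ γK

namespace IsQuaternionicConnection

variable {M} {nabq : V → V → V} {γI γJ γK : V → C}

theorem cyc (hq : M.IsQuaternionicConnection nabq γI γJ γK) :
    M.cyc.IsQuaternionicConnection nabq γJ γK γI :=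
  ⟨hq.linear_left, hq.add_right, hq.leibniz, hq.torsion_free,
    hq.quatConn.2.1, hq.quatConn.2.2, hq.quatConn.1⟩

/-- The trilinear form `g (∇^q_X Y - ∇_X Y, Z)` comparing a quaternionic connection with the
Levi-Civita connection. -/
def difference (hq : M.IsQuaternionicConnection nabq γI γJ γK) : V →ₗ[C] BilinForm C V :=
  (LinearMap.mk₂ C (fun X Y => nabq X Y - M.nab X Y)
    (fun X X' Y => by
      have := hq.linear_left 1 X X' Y
      rw [one_smul, one_smul] at this
      rw [this, M.nab_addX]
      abel)
    (fun f X Y => by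
      have zero_left : nabq 0 Y = 0 := by simpa using hq.linear_left 1 0 0 Y
      have := hq.linear_left f X 0 Y
      rw [add_zero, zero_left, add_zero] at this
      rw [this, M.nab_smulX, smul_sub])
    (fun X Y Y' => by
      rw [hq.add_right, M.nab_add]
      abel)
    (fun f X Y => by
      rw [hq.leibniz, M.nab_leibniz, add_sub_add_right_eq_sub, smul_sub])).compr₂ M.metric

theorem difference_apply (hq : M.IsQuaternionicConnection nabq γI γJ γK) (X Y Z : V) :
    hq.difference X Y Z = M.metric (nabq X Y - M.nab X Y) Z := rfl

theorem difference_symm (hq : M.IsQuaternionicConnection nabq γI γJ γK) (X Y Z : V) :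
    hq.difference X Y Z = hq.difference Y X Z := by
  have : nabq X Y - M.nab X Y = nabq Y X - M.nab Y X := by
    rw [sub_eq_sub_iff_sub_eq_sub, hq.torsion_free, M.torsion_free]
  rw [difference_apply, this, difference_apply]

theorem metric_nabA_I (hq : M.IsQuaternionicConnection nabq γI γJ γK) (X Y Z : V) :
    M.metric Y (M.nabA M.I X Z) =
      γK X * M.metric Y (M.endJ Z) - γJ X * M.metric Y (M.endK Z) -
        (hq.difference X (M.endI Z) Y + hq.difference X Z (M.endI Y)) := by
  have nabA_eq : M.nabA M.I X Z = γK X • M.endJ Z - γJ X • M.endK Z -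
      ((nabq X (M.endI Z) - M.nab X (M.endI Z)) - M.endI (nabq X Z - M.nab X Z)) := by
    have : nabq X (M.endI Z) - M.endI (nabq X Z) = γK X • M.endJ Z - γJ X • M.endK Z :=
      hq.quatConn.1 X Z
    rw [← this, map_sub]
    change M.nab X (M.endI Z) - M.endI (M.nab X Z) = _
    abel
  have hg := M.isHermitianForm_metric
  rw [nabA_eq, difference_apply, difference_apply, hg.symm _ Y, hg.skew_I _ Y]
  simp only [map_sub, map_smul, smul_eq_mul, LinearMap.sub_apply, neg_sub, hg.skew_I, hg.symm _ Y]
  ring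

theorem difference_skew_I (hq : M.IsQuaternionicConnection nabq γI γJ γK) (X Y Z : V) :
    (hq.difference X + (hq.difference X).flip) Y (M.endI Z) =
      -(hq.difference X + (hq.difference X).flip) (M.endI Y) Z := by
  have hg := M.isHermitianForm_metric
  have skew := M.metric_nabA_I_skew X Y Z
  rw [hq.metric_nabA_I, hq.metric_nabA_I, hg.skew_J Z, hg.skew_K Z, hg.symm _ Y,
    hg.symm _ Y] at skew
  simp only [LinearMap.add_apply, BilinForm.flip_apply]
  linear_combination -skew

theorem difference_hermitian (hq : M.IsQuaternionicConnection nabq γI γJ γK) (X : V) :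
    IsHermitianForm M.endI M.endJ M.endK (hq.difference X + (hq.difference X).flip) where
  symm _ _ := add_comm _ _
  skew_I := hq.difference_skew_I X
  skew_J := hq.cyc.difference_skew_I X
  skew_K := hq.cyc.cyc.difference_skew_I X

theorem four_mul_lambdaK {M : AQH 2 C V} (hq : M.IsQuaternionicConnection nabq γI γJ γK) (X : V) :
    4 * M.lambdaK X =
      4 * γK X - ∑ i, hq.difference X (M.frame i) (M.endK (M.frame i)) := by
  have := invertibleOfNat C 2
  have h := M.isQuaternionic
  have hg := M.isHermitianForm_metric
  have he := M.isOrthonormalFrame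
  have orthogonal (Z : V) : M.metric (M.endJ Z) (M.endK Z) = 0 := by
    rw [hg.skew_K, h.K_J, map_neg, LinearMap.neg_apply, hg.apply_I_self, neg_neg]
  have isometry (i) : M.metric (M.endJ (M.frame i)) (M.endJ (M.frame i)) = 1 :=
    (M.J_metric _ _).trans (he.norm_eq_one i)
  have move_I := he.trace_skew ((hq.difference X).compl₂ M.endJ) hg.apply_skew
  simp only [LinearMap.compl₂_apply, h.J_I, map_neg, Finset.sum_neg_distrib, neg_neg] at move_I
  have trace : ∑ j, M.metric (M.endJ (M.frame j)) (M.nabA M.I X (M.frame j)) =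
      8 * γK X - 2 * ∑ i, hq.difference X (M.frame i) (M.endK (M.frame i)) := by
    simp only [hq.metric_nabA_I, orthogonal, isometry, h.I_J, Finset.sum_sub_distrib,
      Finset.sum_add_distrib, move_I, Finset.sum_const, Finset.card_univ, Fintype.card_fin]
    ring
  have lambdaK_eq : M.lambdaK X = (1 / 8 : ℝ) •
      ∑ j, M.metric (M.endJ (M.frame j)) (M.nabA M.I X (M.frame j)) := by
    simp only [lambdaK, nab2_omega, inner2_omega, smul_smul]
    norm_num
    rfl
  rw [lambdaK_eq, trace]
  simp only [ofNat_mul_eq_smul]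
  module

theorem metric_endI_nabA_I (hq : M.IsQuaternionicConnection nabq γI γJ γK) (X Y Z : V) :
    M.metric Y (M.I (M.nabA M.I X Z)) =
      γJ X * M.metric Y (M.endJ Z) + γK X * M.metric Y (M.endK Z) +
        hq.difference X (M.endI Z) (M.endI Y) - hq.difference X Z Y := by
  have hg := M.isHermitianForm_metric
  have h := M.isQuaternionic
  change M.metric Y (M.endI _) = _
  rw [hg.skew_I, hq.metric_nabA_I, h.I_I, ← neg_eq_iff_eq_neg.mpr (hg.skew_I Y _),
    ← neg_eq_iff_eq_neg.mpr (hg.skew_I Y _), h.I_J, h.I_K, map_neg, map_neg]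
  ring

theorem thirtyTwo_mul_metric_xi [Module ℝ V] [IsScalarTower ℝ C V] (M : AQH n C V) (X Y Z : V) :
    32 * M.metric Y (M.xi X Z) =
      16 * (M.lambdaI X * M.metric Y (M.endI Z) + M.lambdaJ X * M.metric Y (M.endJ Z) +
        M.lambdaK X * M.metric Y (M.endK Z)) -
      8 * (M.metric Y (M.I (M.nabA M.I X Z)) + M.metric Y (M.J (M.nabA M.J X Z)) +
        M.metric Y (M.K (M.nabA M.K X Z))) := by
  have metric_smul (r : ℝ) (W : V) : M.metric Y (r • W) = r • M.metric Y W :=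
    LinearMap.map_smul_of_tower _ r W
  have metric_smul_end (f : C) : M.metric Y (f • M.I Z) = f * M.metric Y (M.endI Z) ∧
      M.metric Y (f • M.J Z) = f * M.metric Y (M.endJ Z) ∧
      M.metric Y (f • M.K Z) = f * M.metric Y (M.endK Z) :=
    ⟨map_smul _ _ _, map_smul _ _ _, map_smul _ _ _⟩
  simp only [xi, map_add, metric_smul, metric_smul_end, ofNat_mul_eq_smul]
  module

theorem metric_xi [Module ℝ V] [IsScalarTower ℝ C V] {M : AQH 2 C V}
    (hq : M.IsQuaternionicConnection nabq γI γJ γK) (X Y Z : V) :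
    32 * M.metric Y (M.xi X Z) =
      8 * (3 * hq.difference X Z Y - (hq.difference X (M.endI Z) (M.endI Y) +
        hq.difference X (M.endJ Z) (M.endJ Y) + hq.difference X (M.endK Z) (M.endK Y))) -
      4 * ((∑ i, hq.difference X (M.frame i) (M.endI (M.frame i))) * M.metric Y (M.endI Z) +
        (∑ i, hq.difference X (M.frame i) (M.endJ (M.frame i))) * M.metric Y (M.endJ Z) +
        (∑ i, hq.difference X (M.frame i) (M.endK (M.frame i))) * M.metric Y (M.endK Z)) := by
  have lambda_I : 4 * M.lambdaI X =
      4 * γI X - ∑ i, hq.difference X (M.frame i) (M.endI (M.frame i)) :=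
    hq.cyc.four_mul_lambdaK X
  have lambda_J : 4 * M.lambdaJ X =
      4 * γJ X - ∑ i, hq.difference X (M.frame i) (M.endJ (M.frame i)) :=
    hq.cyc.cyc.four_mul_lambdaK X
  have lambda_K := hq.four_mul_lambdaK X
  have nabA_I := hq.metric_endI_nabA_I X Y Z
  have nabA_J : M.metric Y (M.J (M.nabA M.J X Z)) =
      γK X * M.metric Y (M.endK Z) + γI X * M.metric Y (M.endI Z) +
        hq.difference X (M.endJ Z) (M.endJ Y) - hq.difference X Z Y :=
    hq.cyc.metric_endI_nabA_I X Y Z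
  have nabA_K : M.metric Y (M.K (M.nabA M.K X Z)) =
      γI X * M.metric Y (M.endI Z) + γJ X * M.metric Y (M.endJ Z) +
        hq.difference X (M.endK Z) (M.endK Y) - hq.difference X Z Y :=
    hq.cyc.cyc.metric_endI_nabA_I X Y Z
  rw [thirtyTwo_mul_metric_xi]
  linear_combination -8 * nabA_I - 8 * nabA_J - 8 * nabA_K + 4 * M.metric Y (M.endI Z) * lambda_I +
    4 * M.metric Y (M.endJ Z) * lambda_J + 4 * M.metric Y (M.endK Z) * lambda_K

end IsQuaternionicConnection

theorem xiEH3_eq_quatTwist {M : AQH 2 C V} (θ : V →ₗ[C] C) (X Y Z : V) :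
    M.xiEH3 θ X Y Z =
      quatTwist M.endI M.endJ M.endK (ehTensor M.metric M.endI M.endJ M.endK θ) X Y Z := by
  have sum_wedge (A : Module.End C V) (α : V → C) :
      ∑ i, M.g (M.frame i) X * (M.g (A (M.frame i)) Y * α Z - M.g (A (M.frame i)) Z * α Y) =
        M.metric (A X) Y * α Z - M.metric (A X) Z * α Y := by
    have := M.isOrthonormalFrame.sum_mul_apply
      (α Z • (M.metric.flip Y ∘ₗ A) - α Y • (M.metric.flip Z ∘ₗ A)) X
    refine Eq.trans (Finset.sum_congr rfl fun i _ => ?_) (this.trans ?_)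
    · change _ = M.g X (M.frame i) * (α Z * M.g (A (M.frame i)) Y - α Y * M.g (A (M.frame i)) Z)
      rw [M.g_symm X]
      ring
    · change α Z * M.metric (A X) Y - α Y * M.metric (A X) Z = _
      ring
  have wedge_one := sum_wedge 1 θ
  have wedge_I := sum_wedge M.endI (act1 M.I θ)
  have wedge_J := sum_wedge M.endJ (act1 M.J θ)
  have wedge_K := sum_wedge M.endK (act1 M.K θ)
  rw [quatTwist_ehTensor M.isQuaternionic M.isHermitianForm_metric]
  change (3 : ℝ) • ∑ i, M.g (M.frame i) X * (M.g (M.frame i) Y * θ Z - M.g (M.frame i) Z * θ Y) -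
      (∑ i, M.g (M.frame i) X * (M.g (M.endI (M.frame i)) Y * act1 M.I θ Z -
          M.g (M.endI (M.frame i)) Z * act1 M.I θ Y) +
        ∑ i, M.g (M.frame i) X * (M.g (M.endJ (M.frame i)) Y * act1 M.J θ Z -
          M.g (M.endJ (M.frame i)) Z * act1 M.J θ Y) +
        ∑ i, M.g (M.frame i) X * (M.g (M.endK (M.frame i)) Y * act1 M.K θ Z -
          M.g (M.endK (M.frame i)) Z * act1 M.K θ Y)) -
      (2 / ((2 : ℕ) : ℝ)) • (-θ (M.endI X) * M.metric Y (M.endI Z) +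
        -θ (M.endJ X) * M.metric Y (M.endJ Z) + -θ (M.endK X) * M.metric Y (M.endK Z)) = _
  simp only [Module.End.one_apply] at wedge_one
  rw [wedge_one, wedge_I, wedge_J, wedge_K, Nat.cast_ofNat, div_self two_ne_zero, one_smul,
    ← ofNat_mul_eq_smul]
  change _ - (_ * -θ (M.endI Z) - _ * -θ (M.endI Y) + (_ * -θ (M.endJ Z) - _ * -θ (M.endJ Y)) +
    (_ * -θ (M.endK Z) - _ * -θ (M.endK Y))) - _ = _
  ring

theorem inKH3_cyclicSum (M : AQH n C V) {k : V →ₗ[C] BilinForm C V}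
    (hk : IsTraceFreeHermitian M.endI M.endJ M.endK M.frame k) :
    M.InKH3 fun X Y Z => cyclicSum (quatTwist M.endI M.endJ M.endK k) X Y Z := by
  have := invertibleOfNat C 2
  have h := M.isQuaternionic
  have hg := M.isHermitianForm_metric
  have skew := quatTwist_swap_right hk.hermitian
  have calL_I := calL_cyclicSum_quatTwist h hk.hermitian
  have calL_J := calL_cyclicSum_quatTwist h.cyc hk.cyc.hermitian
  have calL_K := calL_cyclicSum_quatTwist h.cyc.cyc hk.cyc.cyc.hermitian
  have trace_I := hk.sum_cyclicSum h hg M.isOrthonormalFrame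
  have trace_J := hk.cyc.sum_cyclicSum h.cyc hg.cyc M.isOrthonormalFrame
  have trace_K := hk.cyc.cyc.sum_cyclicSum h.cyc.cyc hg.cyc.cyc M.isOrthonormalFrame
  simp only [quatTwist_cyc] at calL_J calL_K trace_J trace_K
  have Lam_eq_zero (A : Module.End C V) (trace : ∀ X,
      ∑ i, cyclicSum (quatTwist M.endI M.endJ M.endK k) X (A (M.frame i)) (M.frame i) = 0) :
      M.Lam A (fun X Y Z => cyclicSum (quatTwist M.endI M.endJ M.endK k) X Y Z) = 0 := by
    funext X
    simp only [Lam, omega, M.g_symm (M.frame _) (A _)]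
    exact (congrArg _ ((M.isOrthonormalFrame.sum_sum_mul _ A).trans (trace X))).trans (smul_zero _)
  have linear : Lin3 fun X Y Z => cyclicSum (quatTwist M.endI M.endJ M.endK k) X Y Z :=
    fun f X X' Y Z => by
      simp only [map_add, map_smul, LinearMap.add_apply, LinearMap.smul_apply, smul_eq_mul]
  exact ⟨⟨cyclicSum_swap_left skew, cyclicSum_swap_right skew⟩, linear, calL_I, calL_J, calL_K,
    Lam_eq_zero M.endI trace_I, Lam_eq_zero M.endJ trace_J, Lam_eq_zero M.endK trace_K⟩

theorem IsQuaternionicConnection.inKEH [Module ℝ V] [IsScalarTower ℝ C V] {M : AQH 2 C V}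
    {nabq : V → V → V} {γI γJ γK : V → C} (hq : M.IsQuaternionicConnection nabq γI γJ γK) :
    M.inKEH := by
  have := invertibleOfNat C 2
  have := invertibleOfNat C 3
  have := invertibleOfNat C 5
  have := invertibleOfNat C 32
  have h := M.isQuaternionic
  have hg := M.isHermitianForm_metric
  have he := M.isOrthonormalFrame
  obtain ⟨k, hermitian, traceFree, quatTwist_eq⟩ :=
    exists_quatTwist_eq h hg he rfl hq.difference_symm hq.difference_hermitian
  obtain ⟨k₀, θ, hk₀, split⟩ := exists_cyclicSum_add_ehTensor (k := (⅟32 : C) • k) h hg he rfl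
    (fun X => (hermitian X).smul _) fun X => by
      simp only [LinearMap.smul_apply, smul_eq_mul, ← Finset.mul_sum, traceFree, mul_zero]
  have xi_eq (X Y Z : V) : M.g Y (M.xi X Z) =
      quatTwist M.endI M.endJ M.endK ((⅟32 : C) • k) X Y Z := by
    change M.metric Y (M.xi X Z) = _
    rw [← invOf_mul_cancel_left (32 : C) (M.metric Y (M.xi X Z)), hq.metric_xi, ← quatTwist_eq]
    simp only [quatTwist_apply, LinearMap.smul_apply, smul_eq_mul]
    ring
  refine ⟨_, θ, M.inKH3_cyclicSum hk₀, fun f X Y => by rw [map_add, map_smul, smul_eq_mul],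
    fun X Y Z => ?_⟩
  rw [xi_eq, split, xiEH3_eq_quatTwist, xiKH3, ← ofNat_mul_eq_smul]
  rfl

end Geometry

end AQH

open AQH in
/-- Any compatible metric on an eight-dimensional quaternionic
manifold is QKT: if the almost quaternionic structure admits a torsion-free
quaternionic connection `∇^q`, then for any compatible metric the intrinsic
torsion lies in `(K+E)H`.  Here `M : AQH 2 C V` packages the almost quaternionic
structure `I, J, K` together with a compatible metric (`4n = 8`, `n = 2`). -/
theorem statement15 {C V : Type*} [CommRing C] [Algebra ℝ C] [AddCommGroup V]
    [Module C V] [Module ℝ V] [IsScalarTower ℝ C V] (M : AQH 2 C V)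
    (hquaternionic : ∃ nabq : V → V → V,
      -- `∇^q` is a connection ...
      (∀ (f : C) X X' Y, nabq (f • X + X') Y = f • nabq X Y + nabq X' Y) ∧
      (∀ X Y Y', nabq X (Y + Y') = nabq X Y + nabq X Y') ∧
      (∀ X (f : C) Y, nabq X (f • Y) = f • nabq X Y + (M.D X f) • Y) ∧
      -- ... which is torsion-free ...
      (∀ X Y, nabq X Y - nabq Y X = M.bracket X Y) ∧
      -- ... and quaternionic
      (∃ γI γJ γK : V → C, M.QuatConn nabq γI γJ γK)) :
    M.inKEH := by
  obtain ⟨nabq, linear_left, add_right, leibniz, torsion_free, γI, γJ, γK, quatConn⟩ :=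
    hquaternionic
  have hq : M.IsQuaternionicConnection nabq γI γJ γK :=
    ⟨linear_left, add_right, leibniz, torsion_free, quatConn⟩
  exact hq.inKEH
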